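/- arXiv:1508.02804 — 8 statements merged into one kernel-verified Lean document; each statement's English description precedes it below -/
import Mathlib

section
/- Let u ∈ F_q^n be a received word of degree k+r with k+1 ≤ k+r ≤ n−1, whose interpolation polynomial u(x) is monic. Then d(u,C) = n−k−r if and only if there exists a subset E = {x_1,…,x_{k+r}} of D of size k+r and a polynomial v(x) ∈ F_q[x] with deg v(x) ≤ k−1 such that u(x) − v(x) = (x−x_1)⋯(x−x_{k+r}). -/
/-!
A codeword is the evaluation on `D` of some `v` with `deg v < k`, and it agrees with `u` exactly at
the roots of `U - v` in `D`, so its distance from `u` is `n` minus the number of those roots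
(`hammingDist_add_card`). Since `U - v` is monic of degree `k + r`, it has at most `k + r` roots;
hence every distance is at least `n - k - r`, with equality exactly when `U - v` has `k + r`
distinct roots in `D`, i.e. is the product of the corresponding linear factors
(`eq_prod_of_card_eq`).
-/

open Polynomial Finset

/-- The generalized Reed-Solomon code of dimension `k` with evaluation set `D`:
codewords are the evaluation vectors of polynomials of degree at most `k - 1`
(i.e. of degree `< k`). -/
def RSCode (F : Type*) [Field F] (D : Finset F) (k : ℕ) : Set (↥D → F) :=
  {f | ∃ P : F[X], P.degree < (k : WithBot ℕ) ∧ ∀ x : D, f x = P.eval (x : F)}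

/-- The error distance from a received word `u` to a code: the minimum
Hamming distance from `u` to a codeword. -/
noncomputable def errDist {F : Type*} [Field F] [DecidableEq F] (D : Finset F)
    (u : ↥D → F) (Code : Set (↥D → F)) : ℕ :=
  sInf (hammingDist u '' Code)

/-- The word of `U` and the codeword of `v` differ exactly off the roots of `U - v`. -/
theorem hammingDist_add_card {F : Type*} [Field F] [DecidableEq F] (D : Finset F)
    (u f : ↥D → F) (U v : F[X]) (hu : ∀ x : D, u x = U.eval (x : F))
    (hf : ∀ x : D, f x = v.eval (x : F)) :
    hammingDist u f + (D.filter (fun x => (U - v).eval x = 0)).card = D.card := by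
  have h1 : hammingDist u f = (D.filter (fun x => ¬ (U - v).eval x = 0)).card := by
    unfold hammingDist
    rw [← Finset.card_map (Function.Embedding.subtype _)]
    congr 1
    ext x
    simp [hu, hf, sub_eq_zero, and_comm]
  rw [h1, add_comm]
  exact Finset.card_filter_add_card_filter_not _

theorem prod_dvd_of_roots {F : Type*} [Field F] (W : F[X]) (E : Finset F)
    (hE : ∀ x ∈ E, W.eval x = 0) : ∏ x ∈ E, (X - C x) ∣ W :=
  Finset.prod_dvd_of_coprime
    (fun _ _ _ _ hxy => Polynomial.pairwise_coprime_X_sub_C Function.injective_id hxy)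
    (fun x hx => Polynomial.dvd_iff_isRoot.mpr (hE x hx))

theorem card_le_natDegree {F : Type*} [Field F] {W : F[X]} (hW : W.Monic) (E : Finset F)
    (hE : ∀ x ∈ E, W.eval x = 0) : E.card ≤ W.natDegree := by
  simpa [natDegree_finsetProd_X_sub_C_eq_card] using
    natDegree_le_of_dvd (prod_dvd_of_roots W E hE) hW.ne_zero

/-- A monic polynomial with as many distinct roots as its degree is the product of the
corresponding linear factors: that product divides it and has the same degree. -/
theorem eq_prod_of_card_eq {F : Type*} [Field F] {W : F[X]} (hW : W.Monic) (E : Finset F)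
    (hE : ∀ x ∈ E, W.eval x = 0) (hc : E.card = W.natDegree) :
    W = ∏ x ∈ E, (X - C x) :=
  eq_of_monic_of_dvd_of_natDegree_le (monic_prod_X_sub_C _ _) hW (prod_dvd_of_roots W E hE)
    (by rw [← hc]; simp [natDegree_finsetProd_X_sub_C_eq_card])

/-- for a received word `u` with monic interpolation polynomial `U`
of degree `k + r`, `k + 1 ≤ k + r ≤ n - 1`, one has `d(u, C) = n - k - r` iff
there is a subset `E ⊆ D` of size `k + r` and a polynomial `v` with
`deg v ≤ k - 1` such that `U - v = ∏_{x ∈ E} (X - x)`. -/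
theorem stmt_1 {F : Type*} [Field F] [Fintype F] [DecidableEq F]
    (D : Finset F) (n k r : ℕ) (hcard : D.card = n)
    (hk : 0 < k) (hkn : k < n)
    (hr : 1 ≤ r) (hkr : k + r ≤ n - 1)
    (u : ↥D → F) (U : F[X])
    (hmonic : U.Monic) (hUdeg : U.natDegree = k + r)
    (hinterp : ∀ x : D, u x = U.eval (x : F)) :
    errDist D u (RSCode F D k) = n - k - r ↔
      ∃ E : Finset F, E ⊆ D ∧ E.card = k + r ∧
        ∃ v : F[X], v.degree < (k : WithBot ℕ) ∧
          U - v = ∏ x ∈ E, (X - C x) := by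
  have hdeg : U.degree = ((k + r : ℕ) : WithBot ℕ) := by
    rw [degree_eq_natDegree hmonic.ne_zero, hUdeg]
  have hlt : ∀ v : F[X], v.degree < (k : WithBot ℕ) → v.degree < U.degree := fun v hv => by
    rw [hdeg]
    exact hv.trans_le (by exact_mod_cast Nat.le_add_right k r)
  have hmon : ∀ v : F[X], v.degree < (k : WithBot ℕ) → (U - v).Monic := fun v hv =>
    hmonic.sub_of_left (hlt v hv)
  have hnat : ∀ v : F[X], v.degree < (k : WithBot ℕ) → (U - v).natDegree = k + r :=
    fun v hv => by
      rw [natDegree_eq_of_degree_eq (degree_sub_eq_left_of_degree_lt (hlt v hv)), hUdeg]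
  have hroots : ∀ v : F[X], ∀ x ∈ D.filter (fun x => (U - v).eval x = 0), (U - v).eval x = 0 :=
    fun v x hx => (Finset.mem_filter.mp hx).2
  have hne : (hammingDist u '' RSCode F D k).Nonempty :=
    ⟨_, fun _ => 0, ⟨0, by simp, by simp⟩, rfl⟩
  constructor
  · intro h
    -- The infimum of a nonempty set of naturals is attained, so some codeword realizes it.
    have hmem := Nat.sInf_mem hne
    rw [show sInf (hammingDist u '' RSCode F D k) = n - k - r from h] at hmem
    obtain ⟨f, ⟨v, hv, hf⟩, hd⟩ := hmem
    have hcount := hammingDist_add_card D u f U v hinterp hf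
    have hc : (D.filter (fun x => (U - v).eval x = 0)).card = k + r := by omega
    exact ⟨_, Finset.filter_subset _ _, hc, v, hv,
      eq_prod_of_card_eq (hmon v hv) _ (hroots v) (hc.trans (hnat v hv).symm)⟩
  · rintro ⟨E, hED, hEc, v, hv, hE⟩
    apply le_antisymm
    · have hcount := hammingDist_add_card D u (fun x => v.eval (x : F)) U v hinterp (fun _ => rfl)
      have hsub : E ⊆ D.filter (fun x => (U - v).eval x = 0) := fun x hx => by
        refine Finset.mem_filter.mpr ⟨hED hx, ?_⟩
        rw [hE, eval_prod]
        exact Finset.prod_eq_zero hx (by simp)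
      have hle := Finset.card_le_card hsub
      have hinf : errDist D u (RSCode F D k) ≤ hammingDist u (fun x : D => v.eval (x : F)) :=
        Nat.sInf_le ⟨_, ⟨v, hv, fun _ => rfl⟩, rfl⟩
      omega
    · refine le_csInf hne ?_
      rintro _ ⟨f, ⟨w, hw, hf⟩, rfl⟩
      have hcount := hammingDist_add_card D u f U w hinterp hf
      have hle := card_le_natDegree (hmon w hw) _ (hroots w)
      rw [hnat w hw] at hle
      omega
end

section
/- Let u ∈ F_q^n be a received word of degree k+r with k+1 ≤ k+r ≤ n−1, whose interpolation polynomial u(x) is monic, and let i be an integer with 1 ≤ i ≤ r. Then d(u,C) ≤ n−k−i if and only if there exists a subset E = {x_1,…,x_{k+i}} of D of size k+i, a monic polynomial g(x) ∈ F_q[x] of degree r−i, and a polynomial v(x) ∈ F_q[x] with deg v(x) ≤ k−1, such that u(x) − v(x) = (x−x_1)⋯(x−x_{k+i})·g(x). -/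
/-! The interpolation polynomial `U` agrees on `D` with the received word, so a codeword given by
`P` is at distance `n - |A|` from `u`, where `A ⊆ D` is the set of roots of `U - P` in `D`. Hence
`d(u, C) ≤ n - k - i` says that for some `P` of degree `< k` the polynomial `U - P` vanishes on a
subset `E ⊆ D` of size `k + i`, that is, `∏ x ∈ E, (X - x)` divides `U - P`. As `deg P < deg U`,
the polynomial `U - P` is monic of degree `k + r`, so the cofactor is monic of degree `r - i`. -/

open Polynomial Finset

/-- Agreements and disagreements of a word with the evaluation vector of `P` partition `D`. -/
theorem card_roots_add_hammingDist {F : Type*} [Field F] [DecidableEq F] (D : Finset F)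
    (u f : ↥D → F) (U P : F[X]) (hu : ∀ x : D, u x = U.eval (x : F))
    (hf : ∀ x : D, f x = P.eval (x : F)) :
    (D.filter fun x => (U - P).eval x = 0).card + hammingDist u f = D.card := by
  have h : hammingDist u f = (D.filter fun x => ¬ (U - P).eval x = 0).card := by
    unfold hammingDist
    rw [← Finset.card_map (Function.Embedding.subtype _)]
    congr 1
    ext x
    simp [hu, hf, sub_eq_zero, and_comm]
  rw [h, Finset.card_filter_add_card_filter_not]

/-- The distance to a nonempty code is attained, so bounding it amounts to exhibiting a close
codeword. -/
theorem errDist_RSCode_le_iff {F : Type*} [Field F] [DecidableEq F] (D : Finset F) (k m : ℕ)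
    (u : ↥D → F) :
    errDist D u (RSCode F D k) ≤ m ↔ ∃ f ∈ RSCode F D k, hammingDist u f ≤ m := by
  constructor
  · intro h
    -- The zero codeword shows that the infimum is not the junk value of the empty set.
    have hne : (hammingDist u '' RSCode F D k).Nonempty :=
      ⟨_, 0, ⟨0, by simp, by simp⟩, rfl⟩
    obtain ⟨f, hf, hfu⟩ := Nat.sInf_mem hne
    exact ⟨f, hf, hfu.trans_le h⟩
  · rintro ⟨f, hf, h⟩
    exact (Nat.sInf_le (Set.mem_image_of_mem _ hf)).trans h

/-- for a received word `u` with monic interpolation polynomial `U`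
of degree `k + r`, `k + 1 ≤ k + r ≤ n - 1`, and `1 ≤ i ≤ r`, one has
`d(u, C) ≤ n - k - i` iff there is a subset `E ⊆ D` of size `k + i`, a monic
polynomial `g` of degree `r - i`, and a polynomial `v` with `deg v ≤ k - 1`,
such that `U - v = (∏_{x ∈ E} (X - x)) * g`. -/
theorem stmt_2 {F : Type*} [Field F] [Fintype F] [DecidableEq F]
    (D : Finset F) (n k r i : ℕ) (hcard : D.card = n)
    (hk : 0 < k) (hkn : k < n)
    (hr : 1 ≤ r) (hkr : k + r ≤ n - 1)
    (hi1 : 1 ≤ i) (hir : i ≤ r)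
    (u : ↥D → F) (U : F[X])
    (hmonic : U.Monic) (hUdeg : U.natDegree = k + r)
    (hinterp : ∀ x : D, u x = U.eval (x : F)) :
    errDist D u (RSCode F D k) ≤ n - k - i ↔
      ∃ E : Finset F, E ⊆ D ∧ E.card = k + i ∧
        ∃ g : F[X], g.Monic ∧ g.natDegree = r - i ∧
          ∃ v : F[X], v.degree < (k : WithBot ℕ) ∧
            U - v = (∏ x ∈ E, (X - C x)) * g := by
  rw [errDist_RSCode_le_iff]
  constructor
  · rintro ⟨f, ⟨P, hP, hf⟩, hd⟩
    have hsum := card_roots_add_hammingDist D u f U P hinterp hf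
    obtain ⟨E, hE, hEc⟩ := Finset.exists_subset_card_eq
      (show k + i ≤ (D.filter fun x => (U - P).eval x = 0).card by omega)
    have hdvd : (∏ x ∈ E, (X - C x)) ∣ U - P :=
      Finset.prod_dvd_of_coprime
        (fun a _ b _ hab => pairwise_coprime_X_sub_C Function.injective_id hab)
        (fun x hx => dvd_iff_isRoot.2 (Finset.mem_filter.1 (hE hx)).2)
    obtain ⟨g, hg⟩ := hdvd
    have hPU : P.degree < U.degree := by
      rw [degree_eq_natDegree hmonic.ne_zero, hUdeg]
      exact hP.trans_le (by exact_mod_cast Nat.le_add_right k r)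
    have hprod : (∏ x ∈ E, (X - C x)).Monic := monic_prod_of_monic _ _ fun x _ => monic_X_sub_C x
    have hgm : g.Monic := hprod.of_mul_monic_left (hg ▸ hmonic.sub_of_left hPU)
    have hdeg := congrArg natDegree hg
    rw [natDegree_eq_of_degree_eq (degree_sub_eq_left_of_degree_lt hPU), hUdeg,
      hprod.natDegree_mul hgm, natDegree_finsetProd_X_sub_C_eq_card, hEc] at hdeg
    exact ⟨E, hE.trans (Finset.filter_subset _ _), hEc, g, hgm, by omega, P, hP, hg⟩
  · rintro ⟨E, hED, hEc, g, -, -, v, hv, hg⟩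
    refine ⟨fun x => v.eval (x : F), ⟨v, hv, fun _ => rfl⟩, ?_⟩
    have hsum := card_roots_add_hammingDist D u (fun x => v.eval (x : F)) U v hinterp fun _ => rfl
    have hle : E.card ≤ (D.filter fun x => (U - v).eval x = 0).card := by
      refine Finset.card_le_card fun x hx => Finset.mem_filter.2 ⟨hED hx, ?_⟩
      rw [hg, eval_mul, eval_prod, Finset.prod_eq_zero hx (by simp), zero_mul]
    omega
end

section
/- Let q > 5 and let C be the primitive Reed-Solomon code of dimension k over F_q (evaluation set D = F_q^*, so n = q−1), with 1 ≤ k and k+1 ≤ q−2, and let u ∈ F_q^{q−1} be a received word whose interpolation polynomial is u(x) = x^{k+1} − b x^k + v(x) with deg v(x) ≤ k−1 and b ∈ F_q. Then d(u,C) = q−k−1 if either (b = 0, p = 2, and k = 1), or (b = 0, p = 2, and k = q−4), or (b = 0 and k = q−3); otherwise d(u,C) = q−k−2. -/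
/-!
The distance from `u` to a codeword `P` is `q - 1` minus the number of nonzero roots of
`g = X ^ (k + 1) - b X ^ k + v - P`, and as `P` varies `g` runs through all monic polynomials of
degree `k + 1` whose coefficient of `X ^ k` is `-b`. Prescribing `k` roots is always possible (the
last root is then forced by `b`), so the distance is `q - k - 1` or `q - k - 2`; it is
`q - k - 2` exactly when `F*` has a subset of size `m = k + 1` and sum `b` (`errDist_of_subset`,
`errDist_of_no_subset`).

It remains to solve this subset sum problem for `2 ≤ m ≤ q - 2`.

* If `b ≠ 0`, deleting one of two different elements from an `(m + 1)`-subset of `F*` gives two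
  different sums, one of which is nonzero and can be scaled to `b` (`subset_sum_ne_zero`).
* If `b = 0`, complementation in `F*` (whose total sum is `0`) exchanges `m` and `q - 1 - m`. For
  `3 ≤ m ≤ q / 2`, start from an `(m - 2)`-subset with nonzero sum `s`; a pigeonhole argument finds
  two further elements with sum `-s` (`subset_sum_zero_half`). For `m = 2` the set `{1, -1}` works
  in odd characteristic, and no pair works in characteristic `2`. For `m = q - 2` the complement
  would be a single nonzero element with sum `0`.
-/

open Polynomial Finset

/-- The primitive Reed-Solomon code of dimension `k` over `F` (evaluation set
`F*`, the nonzero elements): codewords are the evaluation vectors of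
polynomials of degree at most `k - 1` (i.e. of degree `< k`). -/
def RSCodePrim (F : Type*) [Field F] (k : ℕ) : Set ({x : F // x ≠ 0} → F) :=
  {f | ∃ P : F[X], P.degree < (k : WithBot ℕ) ∧ ∀ x : {x : F // x ≠ 0}, f x = P.eval (x : F)}

/-- The error distance from a received word `u` to a code: the minimum
Hamming distance from `u` to a codeword. -/
noncomputable def errDistPrim {F : Type*} [Field F] [Fintype F] [DecidableEq F]
    (u : {x : F // x ≠ 0} → F) (Code : Set ({x : F // x ≠ 0} → F)) : ℕ :=
  sInf (hammingDist u '' Code)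

/-! ### Subset sums in the multiplicative group -/

section SubsetSum

variable {F : Type*} [Field F]

/-- There is a set of `m` nonzero elements of `F` with sum `b`. -/
def HasSubsetSum (F : Type*) [Field F] (m : ℕ) (b : F) : Prop :=
  ∃ S : Finset F, (0 : F) ∉ S ∧ #S = m ∧ ∑ x ∈ S, x = b

theorem exists_nonzero_subset [Fintype F] [DecidableEq F] {m : ℕ} (hm : m + 1 ≤ Fintype.card F) :
    ∃ S : Finset F, (0 : F) ∉ S ∧ #S = m := by
  obtain ⟨S, hS, hc⟩ := Finset.exists_subset_card_eq (s := (univ : Finset F).erase 0) (n := m)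
    (by rw [card_erase_of_mem (mem_univ _), card_univ]; omega)
  exact ⟨S, fun h => by simpa using hS h, hc⟩

theorem subset_sum_ne_zero [Fintype F] [DecidableEq F]
    {m : ℕ} (h1 : 1 ≤ m) (h2 : m + 2 ≤ Fintype.card F) {b : F}
    (hb : b ≠ 0) : HasSubsetSum F m b := by
  obtain ⟨U, hU0, hU⟩ := exists_nonzero_subset (F := F) (m := m + 1) (by omega)
  obtain ⟨x, hx, y, hy, hxy⟩ := Finset.one_lt_card.1 (show 1 < #U by omega)
  have key : ∃ T : Finset F, (0 : F) ∉ T ∧ #T = m ∧ ∑ z ∈ T, z ≠ 0 := by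
    have ex := Finset.add_sum_erase U (fun z => z) hx
    have ey := Finset.add_sum_erase U (fun z => z) hy
    by_cases h : ∑ z ∈ U.erase x, z = 0
    · refine ⟨U.erase y, fun h => hU0 (mem_of_mem_erase h), by
        rw [card_erase_of_mem hy]; omega, fun h' => hxy ?_⟩
      simp only [h, h', add_zero] at ex ey
      rw [ex, ey]
    · exact ⟨U.erase x, fun h => hU0 (mem_of_mem_erase h), by
        rw [card_erase_of_mem hx]; omega, h⟩
  obtain ⟨T, hT0, hT, hs⟩ := key
  have hc : b / ∑ z ∈ T, z ≠ 0 := div_ne_zero hb hs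
  refine ⟨T.image (fun z => b / (∑ z ∈ T, z) * z), ?_, ?_, ?_⟩
  · simp only [mem_image, not_exists, not_and]
    intro z hz h
    rcases mul_eq_zero.1 h with h | h
    · exact hc h
    · exact hT0 (h ▸ hz)
  · rw [card_image_of_injective _ (mul_right_injective₀ hc), hT]
  · rw [sum_image (fun _ _ _ _ h => mul_right_injective₀ hc h), ← mul_sum,
      div_mul_cancel₀ _ hs]

theorem sum_univ_eq_zero [Fintype F] (hq : 2 < Fintype.card F) : ∑ x : F, x = 0 := by
  have := FiniteField.sum_pow_lt_card_sub_one F 1 (by omega)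
  simpa using this

theorem HasSubsetSum.compl [Fintype F] [DecidableEq F] (hq : 2 < Fintype.card F) {m : ℕ}
    (h : HasSubsetSum F m (0 : F)) : HasSubsetSum F (Fintype.card F - 1 - m) (0 : F) := by
  obtain ⟨S, h0, hc, hs⟩ := h
  refine ⟨(insert 0 S)ᶜ, by simp, ?_, ?_⟩
  · rw [card_compl, card_insert_of_notMem h0]; omega
  · have h := sum_add_sum_compl (insert (0 : F) S) (fun x => x)
    rwa [sum_insert h0, hs, sum_univ_eq_zero hq, zero_add, zero_add] at h

theorem subset_sum_zero_half [Fintype F] [DecidableEq F]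
    {m : ℕ} (h1 : 3 ≤ m) (h2 : 2 * m ≤ Fintype.card F) :
    HasSubsetSum F m (0 : F) := by
  obtain ⟨S, h0, hc, hs⟩ :=
    subset_sum_ne_zero (F := F) (m := m - 2) (by omega) (by omega) one_ne_zero
  -- `y` must avoid `B`, the reflection `-1 - B` of `B`, and the solutions of `y + y = -1`.
  set B := insert 0 S with hB
  set H := (univ : Finset F).filter (fun y => y + y = -1) with hH
  have hBc : #B = m - 1 := by rw [hB, card_insert_of_notMem h0]; omega
  have hHc : #H ≤ 1 := by
    rw [card_le_one]
    intro y hy z hz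
    simp only [hH, mem_filter, mem_univ, true_and] at hy hz
    by_contra hne
    have h2 : (2 : F) = 0 := by
      have : (2 : F) * (y - z) = 0 := by linear_combination hy - hz
      exact (mul_eq_zero.1 this).resolve_right (sub_ne_zero.2 hne)
    exact one_ne_zero (α := F) (by linear_combination -hy + (y + 1) * h2)
  have hex : ∃ y, y ∉ (B ∪ B.image (fun z => -1 - z)) ∪ H := by
    by_contra! hall
    have e : (B ∪ B.image (fun z => -1 - z)) ∪ H = univ := eq_univ_of_forall hall
    have c1 := card_union_le (B ∪ B.image (fun z => -1 - z)) H
    have c2 := card_union_le B (B.image (fun z => -1 - z))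
    have c3 : #(B.image (fun z => -1 - z)) ≤ #B := card_image_le
    rw [e, card_univ] at c1
    omega
  obtain ⟨y, hy⟩ := hex
  simp only [mem_union, not_or, mem_image, not_exists, not_and, hH, mem_filter, mem_univ,
    true_and] at hy
  obtain ⟨⟨hyB, hyI⟩, hyH⟩ := hy
  have hzB : -1 - y ∉ B := fun h => hyI _ h (by ring)
  simp only [hB, mem_insert, not_or] at hyB hzB
  have hyz : y ≠ -1 - y := fun h => hyH (by linear_combination h)
  have hyS : y ∉ insert (-1 - y) S := by simp [hyz, hyB.2]
  refine ⟨insert y (insert (-1 - y) S), ?_, ?_, ?_⟩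
  · simp only [mem_insert, not_or]
    exact ⟨Ne.symm hyB.1, Ne.symm hzB.1, h0⟩
  · rw [card_insert_of_notMem hyS, card_insert_of_notMem hzB.2]; omega
  · rw [sum_insert hyS, sum_insert hzB.2, hs]; ring

theorem subset_sum_zero [Fintype F] [DecidableEq F]
    {m : ℕ} (h1 : 3 ≤ m) (h2 : m + 4 ≤ Fintype.card F) :
    HasSubsetSum F m (0 : F) := by
  by_cases h : 2 * m ≤ Fintype.card F
  · exact subset_sum_zero_half h1 h
  · have := (subset_sum_zero_half (F := F) (m := Fintype.card F - 1 - m)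
      (by omega) (by omega)).compl (by omega)
    rwa [show Fintype.card F - 1 - (Fintype.card F - 1 - m) = m by omega] at this

theorem subset_sum_zero_two [DecidableEq F] (h2 : (2 : F) ≠ 0) : HasSubsetSum F 2 (0 : F) := by
  have h : (1 : F) ≠ -1 := fun h => h2 (by linear_combination h)
  exact ⟨{1, -1}, by simp, card_pair h, by rw [sum_pair h]; ring⟩

theorem not_subset_sum_zero_one : ¬ HasSubsetSum F 1 (0 : F) := by
  rintro ⟨S, h0, hc, hs⟩
  obtain ⟨a, rfl⟩ := card_eq_one.1 hc
  simp at h0 hs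
  exact h0 hs.symm

theorem not_subset_sum_zero_two [DecidableEq F]
    (h2 : (2 : F) = 0) : ¬ HasSubsetSum F 2 (0 : F) := by
  rintro ⟨S, h0, hc, hs⟩
  obtain ⟨a, c, hac, rfl⟩ := card_eq_two.1 hc
  rw [sum_pair hac] at hs
  exact hac (by linear_combination hs - c * h2)

theorem hasSubsetSum_iff [Fintype F] [DecidableEq F]
    (p : ℕ) [Fact p.Prime] [CharP F p] (hq : 5 < Fintype.card F)
    (k : ℕ) (hk : 1 ≤ k) (hk1 : k + 1 ≤ Fintype.card F - 2) (b : F) :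
    HasSubsetSum F (k + 1) b ↔
      ¬ ((b = 0 ∧ p = 2 ∧ k = 1) ∨ (b = 0 ∧ p = 2 ∧ k = Fintype.card F - 4) ∨
        (b = 0 ∧ k = Fintype.card F - 3)) := by
  have hp2 : p = 2 ↔ (2 : F) = 0 := by
    have h := CharP.cast_eq_zero_iff F p 2
    rw [Nat.cast_ofNat] at h
    rw [h, Nat.prime_dvd_prime_iff_eq Fact.out Nat.prime_two]
  constructor
  · rintro h (⟨rfl, hp, rfl⟩ | ⟨rfl, hp, rfl⟩ | ⟨rfl, rfl⟩)
    · exact not_subset_sum_zero_two (hp2.1 hp) h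
    · have := h.compl (by omega)
      rw [show Fintype.card F - 1 - (Fintype.card F - 4 + 1) = 2 by omega] at this
      exact not_subset_sum_zero_two (hp2.1 hp) this
    · have := h.compl (by omega)
      rw [show Fintype.card F - 1 - (Fintype.card F - 3 + 1) = 1 by omega] at this
      exact not_subset_sum_zero_one this
  · intro h
    by_cases hb : b = 0
    · subst hb
      simp only [true_and, not_or, not_and] at h
      obtain ⟨ha, hc, hd⟩ := h
      by_cases k1 : k = 1
      · subst k1
        exact subset_sum_zero_two fun h => ha (hp2.2 h) rfl
      by_cases k4 : k = Fintype.card F - 4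
      · have := (subset_sum_zero_two fun h => hc (hp2.2 h) k4).compl (F := F) (by omega)
        rwa [show Fintype.card F - 1 - 2 = k + 1 by omega] at this
      · exact subset_sum_zero (by omega) (by omega)
    · exact subset_sum_ne_zero (by omega) (by omega) hb

end SubsetSum

/-! ### From subset sums to the error distance -/

section Distance

variable {F : Type*} [Field F]

theorem monic_of_leading {k : ℕ} {b : F} {w : F[X]} (hw : w.degree < (k : WithBot ℕ)) :
    (X ^ (k + 1) - C b * X ^ k + w).Monic ∧ (X ^ (k + 1) - C b * X ^ k + w).natDegree = k + 1 ∧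
      (X ^ (k + 1) - C b * X ^ k + w).nextCoeff = -b := by
  have hd : (-(C b * X ^ k) + w).degree < ((k + 1 : ℕ) : WithBot ℕ) := by
    refine lt_of_le_of_lt (degree_add_le _ _) (max_lt ?_ ?_)
    · rw [degree_neg]
      exact (degree_C_mul_X_pow_le k b).trans_lt (by exact_mod_cast Nat.lt_succ_self k)
    · exact hw.trans (by exact_mod_cast Nat.lt_succ_self k)
  have e : X ^ (k + 1) - C b * X ^ k + w = X ^ (k + 1) + (-(C b * X ^ k) + w) := by ring
  have hn : (X ^ (k + 1) - C b * X ^ k + w).natDegree = k + 1 := by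
    rw [e]
    apply natDegree_eq_of_degree_eq_some
    rw [degree_add_eq_left_of_degree_lt (by rwa [degree_X_pow]), degree_X_pow]
  refine ⟨?_, hn, ?_⟩
  · rw [e]; exact monic_X_pow_add hd
  · rw [nextCoeff_of_natDegree_pos (by omega), hn]
    simp [coeff_X_pow, coeff_eq_zero_of_degree_lt hw]

/-- Every monic split polynomial of degree `k + 1` whose roots sum to `b` is the difference of the
received polynomial and a codeword polynomial. -/
theorem exists_codeword_poly {k : ℕ} {b : F} {v : F[X]} (hv : v.degree < (k : WithBot ℕ))
    (M : Multiset F) (hM : Multiset.card M = k + 1) (hs : M.sum = b) :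
    ∃ P : F[X], P.degree < (k : WithBot ℕ) ∧
      X ^ (k + 1) - C b * X ^ k + v - P = (M.map fun a => X - C a).prod := by
  obtain ⟨hm, hn, hc⟩ := monic_of_leading (b := b) hv
  refine ⟨X ^ (k + 1) - C b * X ^ k + v - (M.map fun a => X - C a).prod, ?_, by ring⟩
  have hm' : ((M.map fun a => X - C a).prod).Monic := monic_multisetProd_X_sub_C M
  have hn' : ((M.map fun a => X - C a).prod).natDegree = k + 1 := by
    rw [natDegree_multiset_prod_X_sub_C_eq_card, hM]
  have hc' : ((M.map fun a => X - C a).prod).nextCoeff = -b := by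
    rw [multiset_prod_X_sub_C_nextCoeff, hs]
  rw [degree_lt_iff_coeff_zero]
  intro i hi
  rw [coeff_sub, sub_eq_zero]
  rcases Nat.lt_or_ge (k + 1) i with h | h
  · rw [coeff_eq_zero_of_natDegree_lt (by omega), coeff_eq_zero_of_natDegree_lt (by omega)]
  rcases h.eq_or_lt with rfl | h
  · have a1 := hm.coeff_natDegree
    have a2 := hm'.coeff_natDegree
    rw [hn] at a1
    rw [hn'] at a2
    rw [a1, a2]
  · obtain rfl : i = k := by omega
    rw [nextCoeff_of_natDegree_pos (by omega), hn] at hc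
    rw [nextCoeff_of_natDegree_pos (by omega), hn'] at hc'
    exact hc.trans hc'.symm

/-- The nonzero roots of `g`, without multiplicity. -/
def nonzeroRoots [Fintype F] [DecidableEq F]
    (g : F[X]) : Finset F := univ.filter fun x => x ≠ 0 ∧ g.eval x = 0

theorem hammingDist_add_card_s4 [Fintype F] [DecidableEq F] (g P : F[X]) (u c : {x : F // x ≠ 0} → F)
    (hu : ∀ x : {x : F // x ≠ 0}, u x = g.eval (x : F))
    (hc : ∀ x : {x : F // x ≠ 0}, c x = P.eval (x : F)) :
    hammingDist u c + #(nonzeroRoots (g - P)) = Fintype.card F - 1 := by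
  have h1 : #(univ.filter fun x : {x : F // x ≠ 0} => u x = c x) = #(nonzeroRoots (g - P)) := by
    refine card_bij (fun x _ => (x : F)) ?_ ?_ ?_
    · intro x hx
      simp only [mem_filter, mem_univ, true_and] at hx
      simp only [nonzeroRoots, mem_filter, mem_univ, true_and, eval_sub]
      exact ⟨x.2, by rw [← hu, ← hc, hx, sub_self]⟩
    · intro x _ y _ h
      exact Subtype.ext h
    · intro y hy
      simp only [nonzeroRoots, mem_filter, mem_univ, true_and, eval_sub] at hy
      refine ⟨⟨y, hy.1⟩, ?_, rfl⟩
      simp only [mem_filter, mem_univ, true_and]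
      rw [hu, hc]
      exact sub_eq_zero.1 hy.2
  have h2 : Fintype.card {x : F // x ≠ 0} = Fintype.card F - 1 := by
    rw [Fintype.card_subtype_compl, Fintype.card_subtype_eq]
  have h3 := card_filter_add_card_filter_not (s := (univ : Finset {x : F // x ≠ 0}))
    (fun x => u x = c x)
  rw [card_univ, h2, h1] at h3
  rw [hammingDist, add_comm]
  exact h3

theorem card_nonzeroRoots_le [Fintype F] [DecidableEq F]
    {k : ℕ} {b : F} {w : F[X]} (hw : w.degree < (k : WithBot ℕ)) :
    #(nonzeroRoots (X ^ (k + 1) - C b * X ^ k + w)) ≤ k + 1 ∧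
      (#(nonzeroRoots (X ^ (k + 1) - C b * X ^ k + w)) = k + 1 → HasSubsetSum F (k + 1) b) := by
  obtain ⟨hm, hn, hc⟩ := monic_of_leading (b := b) hw
  set g := X ^ (k + 1) - C b * X ^ k + w with hg
  have hle : (nonzeroRoots g).val ≤ g.roots := by
    rw [Multiset.le_iff_subset (nonzeroRoots g).nodup]
    intro x hx
    have hx : x ∈ nonzeroRoots g := hx
    simp only [nonzeroRoots, mem_filter] at hx
    exact (mem_roots hm.ne_zero).2 hx.2.2
  have hcard : Multiset.card g.roots ≤ k + 1 := hn ▸ card_roots' g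
  refine ⟨(Multiset.card_le_card hle).trans hcard, fun h => ?_⟩
  have he : (nonzeroRoots g).val = g.roots :=
    Multiset.eq_of_le_of_card_le hle (hcard.trans h.ge)
  refine ⟨nonzeroRoots g, by simp [nonzeroRoots], h, ?_⟩
  have hr : Multiset.card g.roots = g.natDegree := by rw [← he, hn]; exact h
  have hp := prod_multiset_X_sub_C_of_monic_of_roots_card_eq hm hr
  have h4 := multiset_prod_X_sub_C_nextCoeff g.roots
  rw [hp, hc] at h4
  rw [neg_inj.1 h4, ← he]
  simp only [Finset.sum, Multiset.map_id']

/-- A multiset of `k + 1` prescribed roots with sum `b`, at least `j` of which are distinct and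
nonzero, yields a codeword at distance at most `q - 1 - j`. -/
theorem exists_codeword_close [Fintype F] [DecidableEq F]
    {k : ℕ} {b : F} {v : F[X]} (hv : v.degree < (k : WithBot ℕ))
    (u : {x : F // x ≠ 0} → F)
    (hu : ∀ x : {x : F // x ≠ 0}, u x = (X ^ (k + 1) - C b * X ^ k + v).eval (x : F))
    (M : Multiset F) (hM : Multiset.card M = k + 1) (hs : M.sum = b)
    (S : Finset F) (hS0 : (0 : F) ∉ S) (hS : ∀ x ∈ S, x ∈ M) :
    ∃ c ∈ RSCodePrim F k, hammingDist u c + #S ≤ Fintype.card F - 1 := by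
  obtain ⟨P, hP, hg⟩ := exists_codeword_poly hv M hM hs
  refine ⟨fun x => P.eval (x : F), ⟨P, hP, fun _ => rfl⟩, ?_⟩
  rw [← hammingDist_add_card_s4 _ P u (fun x => P.eval (x : F)) hu (fun _ => rfl), hg]
  refine Nat.add_le_add_left (card_le_card fun x hx => ?_) _
  simp only [nonzeroRoots, mem_filter, mem_univ, true_and]
  refine ⟨fun h => hS0 (h ▸ hx), ?_⟩
  rw [eval_multiset_prod, Multiset.prod_eq_zero_iff, Multiset.map_map, Multiset.mem_map]
  exact ⟨x, hS x hx, by simp⟩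

/-- Every codeword is at distance at least `q - k - 2`, with equality only if the subset sum
problem is solvable. -/
theorem codeword_far [Fintype F] [DecidableEq F]
    {k : ℕ} {b : F} {v : F[X]} (hv : v.degree < (k : WithBot ℕ))
    (u : {x : F // x ≠ 0} → F)
    (hu : ∀ x : {x : F // x ≠ 0}, u x = (X ^ (k + 1) - C b * X ^ k + v).eval (x : F))
    (c : {x : F // x ≠ 0} → F) (hc : c ∈ RSCodePrim F k) :
    ∃ j, hammingDist u c + j = Fintype.card F - 1 ∧ j ≤ k + 1 ∧
      (j = k + 1 → HasSubsetSum F (k + 1) b) := by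
  obtain ⟨P, hP, hcP⟩ := hc
  have hw : (v - P).degree < (k : WithBot ℕ) :=
    lt_of_le_of_lt (degree_sub_le _ _) (max_lt hv hP)
  refine ⟨_, hammingDist_add_card_s4 _ P u c hu hcP, ?_⟩
  rw [add_sub_assoc]
  exact card_nonzeroRoots_le hw

theorem errDist_of_subset [Fintype F] [DecidableEq F]
    {k : ℕ} {b : F} {v : F[X]} (hv : v.degree < (k : WithBot ℕ))
    (u : {x : F // x ≠ 0} → F)
    (hu : ∀ x : {x : F // x ≠ 0}, u x = (X ^ (k + 1) - C b * X ^ k + v).eval (x : F))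
    (h : HasSubsetSum F (k + 1) b) :
    errDistPrim u (RSCodePrim F k) = Fintype.card F - k - 2 := by
  obtain ⟨S, h0, hc, hs⟩ := h
  obtain ⟨c, hcC, hd⟩ := exists_codeword_close hv u hu S.val hc
    (by rw [← hs]; simp only [Finset.sum, Multiset.map_id']) S h0 (fun _ hx => hx)
  have hfar := fun c' hc' => codeword_far hv u hu c' hc'
  refine IsLeast.csInf_eq ⟨⟨c, hcC, ?_⟩, ?_⟩
  · obtain ⟨j, h1, h2, -⟩ := hfar c hcC
    omega
  · rintro _ ⟨c', hc', rfl⟩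
    obtain ⟨j, h1, h2, -⟩ := hfar c' hc'
    omega

theorem errDist_of_no_subset [Fintype F] [DecidableEq F]
    {k : ℕ} {b : F} {v : F[X]} (hk : k + 1 ≤ Fintype.card F)
    (hv : v.degree < (k : WithBot ℕ)) (u : {x : F // x ≠ 0} → F)
    (hu : ∀ x : {x : F // x ≠ 0}, u x = (X ^ (k + 1) - C b * X ^ k + v).eval (x : F))
    (h : ¬ HasSubsetSum F (k + 1) b) :
    errDistPrim u (RSCodePrim F k) = Fintype.card F - k - 1 := by
  obtain ⟨S, h0, hc⟩ := exists_nonzero_subset (F := F) hk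
  -- The `k` elements of `S` are roots, and the last root is the one making the sum equal to `b`.
  obtain ⟨c, hcC, hd⟩ := exists_codeword_close hv u hu ((b - S.val.sum) ::ₘ S.val)
    (by rw [Multiset.card_cons]; exact congrArg (· + 1) hc)
    (by rw [Multiset.sum_cons]; ring) S h0 (fun _ hx => Multiset.mem_cons_of_mem hx)
  have hfar : ∀ c' ∈ RSCodePrim F k, Fintype.card F - k - 1 ≤ hammingDist u c' := by
    intro c' hc'
    obtain ⟨j, h1, h2, h3⟩ := codeword_far hv u hu c' hc'
    have h4 : j ≠ k + 1 := fun e => h (h3 e)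
    omega
  refine IsLeast.csInf_eq ⟨⟨c, hcC, ?_⟩, ?_⟩
  · have := hfar c hcC
    omega
  · rintro _ ⟨c', hc', rfl⟩
    exact hfar c' hc'

end Distance

/-- for the primitive Reed-Solomon code (evaluation set `F_q^*`),
`q > 5`, and a received word `u` with interpolation polynomial
`x^{k+1} - b x^k + v(x)`, `deg v ≤ k - 1`: `d(u, C) = q - k - 1` if
(`b = 0`, `p = 2`, `k = 1`), or (`b = 0`, `p = 2`, `k = q - 4`), or
(`b = 0`, `k = q - 3`); otherwise `d(u, C) = q - k - 2`. -/
theorem stmt_4 {F : Type*} [Field F] [Fintype F] [DecidableEq F]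
    (p : ℕ) [Fact p.Prime] [CharP F p]
    (hq : 5 < Fintype.card F)
    (k : ℕ) (hk : 1 ≤ k) (hk1 : k + 1 ≤ Fintype.card F - 2)
    (b : F) (v : F[X]) (hv : v.degree < (k : WithBot ℕ))
    (u : {x : F // x ≠ 0} → F)
    (hu : ∀ x : {x : F // x ≠ 0}, u x = (X ^ (k + 1) - C b * X ^ k + v).eval (x : F)) :
    (((b = 0 ∧ p = 2 ∧ k = 1) ∨ (b = 0 ∧ p = 2 ∧ k = Fintype.card F - 4) ∨
        (b = 0 ∧ k = Fintype.card F - 3)) →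
        errDistPrim u (RSCodePrim F k) = Fintype.card F - k - 1) ∧
    (¬ ((b = 0 ∧ p = 2 ∧ k = 1) ∨ (b = 0 ∧ p = 2 ∧ k = Fintype.card F - 4) ∨
        (b = 0 ∧ k = Fintype.card F - 3)) →
        errDistPrim u (RSCodePrim F k) = Fintype.card F - k - 2) := by
  have hiff := hasSubsetSum_iff p hq k hk hk1 b
  refine ⟨fun h => ?_, fun h => ?_⟩
  · exact errDist_of_no_subset (by omega) hv u hu fun hs => hiff.1 hs h
  · exact errDist_of_subset hv u hu (hiff.2 h)
end

section
/- Let q be a power of 2, let t be an integer with 2 ≤ t ≤ q−2, and let c ∈ F_q^*. Then there exist t distinct elements γ_1, γ_2, …, γ_t of F_q^* such that c = Σ_{1 ≤ i < j ≤ t} γ_i γ_j. -/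
/-!
Scaling all `γ i` by `l` multiplies the second elementary symmetric sum by `l ^ 2`, and every
element of a finite field of characteristic 2 is a square, so it suffices to find one family of
`t` distinct nonzero elements whose sum is nonzero. As `t ≤ q - 2`, there are `t - 2` distinct
nonzero elements `u i` and three further ones `a`, `b`, `d`. With `s = ∑ u i`, the values of the
symmetric sum at `(a, b, u)` and `(a, d, u)` differ by `(s + a) * (b - d)`, and at `(b, d, u)` and
`(a, d, u)` by `(s + d) * (b - a)`. If all three vanished, then `s = -a = -d`, contradicting
`a ≠ d`.
-/

open Finset

/-- The second elementary symmetric sum of a finite family. -/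
def pairSum {F : Type*} [Field F] {t : ℕ} (γ : Fin t → F) : F :=
  ∑ p ∈ Finset.univ.filter (fun p : Fin t × Fin t => p.1 < p.2), γ p.1 * γ p.2

lemma pairSum_cons {F : Type*} [Field F] {n : ℕ} (a : F) (u : Fin n → F) :
    pairSum (Fin.cons a u : Fin (n + 1) → F) = a * ∑ i, u i + pairSum u := by
  simp [pairSum, Finset.sum_filter, Fintype.sum_prod_type, Fin.sum_univ_succ, Finset.mul_sum]

lemma exists_pairSum_ne_zero {F : Type*} [Field F] [Fintype F] (n : ℕ)
    (h : n + 4 ≤ Fintype.card F) :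
    ∃ γ : Fin (n + 2) → F, Function.Injective γ ∧ (∀ i, γ i ≠ 0) ∧ pairSum γ ≠ 0 := by
  classical
  obtain ⟨g⟩ : Nonempty (Fin (n + 3) ↪ Fˣ) := by
    apply Function.Embedding.nonempty_of_card_le
    rw [Fintype.card_units, Fintype.card_fin]
    omega
  obtain ⟨f, hf, hf0⟩ : ∃ f : Fin (n + 3) → F, Function.Injective f ∧ ∀ i, f i ≠ 0 :=
    ⟨fun i => g i, fun i j hij => g.injective (Units.ext hij), fun i => (g i).ne_zero⟩
  obtain ⟨a, f, rfl⟩ : ∃ a f', f = Fin.cons a f' := ⟨_, _, (Fin.cons_self_tail f).symm⟩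
  obtain ⟨b, f, rfl⟩ : ∃ a f', f = Fin.cons a f' := ⟨_, _, (Fin.cons_self_tail f).symm⟩
  obtain ⟨d, u, rfl⟩ : ∃ a f', f = Fin.cons a f' := ⟨_, _, (Fin.cons_self_tail f).symm⟩
  simp only [Fin.cons_injective_iff, Fin.range_cons, Set.mem_insert_iff, not_or] at hf
  simp only [Fin.forall_fin_succ (n := n + 2), Fin.forall_fin_succ (n := n + 1),
    Fin.forall_fin_succ (n := n), Fin.cons_zero, Fin.cons_succ] at hf0
  obtain ⟨⟨hab, had, hau⟩, ⟨hbd, hbu⟩, hdu, hu⟩ := hf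
  obtain ⟨ha, hb, hd, hu0⟩ := hf0
  by_contra! H
  have key : ∀ x y : F, x ≠ 0 → y ≠ 0 → x ≠ y → x ∉ Set.range u → y ∉ Set.range u →
      x * (y + ∑ i, u i) + (y * ∑ i, u i + pairSum u) = 0 := by
    intro x y hx hy hxy hxu hyu
    have := H (Fin.cons x (Fin.cons y u))
      (by simp only [Fin.cons_injective_iff, Fin.range_cons, Set.mem_insert_iff, not_or]
          exact ⟨⟨hxy, hxu⟩, hyu, hu⟩)
      (by simp only [Fin.forall_fin_succ (n := n + 1), Fin.forall_fin_succ (n := n),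
            Fin.cons_zero, Fin.cons_succ]
          exact ⟨hx, hy, hu0⟩)
    simpa only [pairSum_cons, Fin.sum_cons] using this
  have h1 := key a b ha hb hab hau hbu
  have h2 := key a d ha hd had hau hdu
  have h3 := key b d hb hd hbd hbu hdu
  have e1 : (∑ i, u i + a) * (b - d) = 0 := by linear_combination h1 - h2
  have e2 : (∑ i, u i + d) * (b - a) = 0 := by linear_combination h3 - h2
  have e1' := (mul_eq_zero.mp e1).resolve_right (sub_ne_zero.mpr hbd)
  have e2' := (mul_eq_zero.mp e2).resolve_right (sub_ne_zero.mpr (Ne.symm hab))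
  exact had (by linear_combination e1' - e2')

/-- for `q` a power of 2, `2 ≤ t ≤ q - 2`, and `c ∈ F_q^*`,
there exist `t` distinct nonzero elements `γ_1, …, γ_t` of `F_q` with
`c = Σ_{1 ≤ i < j ≤ t} γ_i γ_j`. -/
theorem stmt_12 {F : Type*} [Field F] [Fintype F] [CharP F 2]
    (t : ℕ) (ht2 : 2 ≤ t) (ht : t ≤ Fintype.card F - 2)
    (c : F) (hc : c ≠ 0) :
    ∃ γ : Fin t → F, Function.Injective γ ∧ (∀ i, γ i ≠ 0) ∧
      c = ∑ p ∈ Finset.univ.filter (fun p : Fin t × Fin t => p.1 < p.2),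
            γ p.1 * γ p.2 := by
  obtain ⟨n, rfl⟩ : ∃ n, t = n + 2 := ⟨t - 2, by omega⟩
  obtain ⟨γ, hγ, hγ0, hs⟩ := exists_pairSum_ne_zero (F := F) n (by omega)
  obtain ⟨l, hl⟩ := FiniteField.isSquare_of_char_two (ringChar.eq F 2) (c / pairSum γ)
  have hl0 : l ≠ 0 := by
    rintro rfl
    exact div_ne_zero hc hs (by simpa using hl)
  refine ⟨fun i => l * γ i, fun i j hij => hγ (mul_left_cancel₀ hl0 hij),
    fun i => mul_ne_zero hl0 (hγ0 i), ?_⟩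
  rw [div_eq_iff hs] at hl
  rw [hl, pairSum, Finset.mul_sum]
  exact Finset.sum_congr rfl fun p _ => by ring
end

section
/- Let q be a power of 2, let t be an integer with 2 ≤ t ≤ q−3, and let c ∈ F_q^*. Then there exist t distinct elements γ_1, γ_2, …, γ_t of F_q^* such that c = Σ_{1 ≤ i ≤ j ≤ t} γ_i γ_j (the sum including the diagonal terms γ_i²). -/
/-! The form `h(γ) = Σ_{i ≤ j} γ_i γ_j` is homogeneous of degree 2, and every element of a finite field
of characteristic 2 is a square. Hence it suffices to find distinct nonzero `γ_i` with `h(γ) ≠ 0`: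
rescaling by a square root of `c / h(γ)` then gives the value `c`.

To find such a family, fix any `t - 1` distinct nonzero elements `r`. As a function of one further
element `x`, the form is a monic quadratic `x² + (Σ r_j) x + h(r)` (`hsum_cons`), with at most two
roots, while at least `q - t ≥ 3` nonzero elements lie outside `r`.
-/

open Finset

/-- Prepending `x` to `r` turns the complete homogeneous form of degree 2 into a monic quadratic
in `x`. -/
lemma hsum_cons {F : Type*} [Field F] {n : ℕ} (r : Fin n → F) (x : F) :
    ∑ p ∈ Finset.univ.filter (fun p : Fin (n + 1) × Fin (n + 1) => p.1 ≤ p.2),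
        (Fin.cons x r : Fin (n + 1) → F) p.1 * (Fin.cons x r : Fin (n + 1) → F) p.2
      = x * x + x * (∑ j, r j) +
        ∑ p ∈ Finset.univ.filter (fun p : Fin n × Fin n => p.1 ≤ p.2), r p.1 * r p.2 := by
  simp only [Finset.sum_filter, Fintype.sum_prod_type, Fin.sum_univ_succ, Fin.cons_zero,
    Fin.cons_succ, Fin.succ_le_succ_iff, Fin.zero_le, if_true, Finset.mul_sum, le_refl]
  simp [Fin.succ_ne_zero]

theorem stmt_13 {F : Type*} [Field F] [Fintype F] [CharP F 2]
    (t : ℕ) (ht2 : 2 ≤ t) (ht : t ≤ Fintype.card F - 3)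
    (c : F) (hc : c ≠ 0) :
    ∃ γ : Fin t → F, Function.Injective γ ∧ (∀ i, γ i ≠ 0) ∧
      c = ∑ p ∈ Finset.univ.filter (fun p : Fin t × Fin t => p.1 ≤ p.2),
            γ p.1 * γ p.2 := by
  classical
  -- Homogeneity and surjectivity of squaring reduce the claim to a nonzero value.
  suffices H : ∃ γ : Fin t → F, Function.Injective γ ∧ (∀ i, γ i ≠ 0) ∧
      ∑ p ∈ Finset.univ.filter (fun p : Fin t × Fin t => p.1 ≤ p.2), γ p.1 * γ p.2 ≠ 0 by
    obtain ⟨γ, hinj, hne, hs⟩ := H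
    set s := ∑ p ∈ Finset.univ.filter (fun p : Fin t × Fin t => p.1 ≤ p.2), γ p.1 * γ p.2 with hsdef
    obtain ⟨l, hl⟩ := FiniteField.isSquare_of_char_two (ringChar.eq F 2) (c / s)
    have hl0 : l ≠ 0 := by
      rintro rfl
      simp [hc, hs] at hl
    refine ⟨fun i => l * γ i, fun i j h => hinj (mul_left_cancel₀ hl0 h),
      fun i => mul_ne_zero hl0 (hne i), ?_⟩
    have h1 : ∑ p ∈ Finset.univ.filter (fun p : Fin t × Fin t => p.1 ≤ p.2),
        (l * γ p.1) * (l * γ p.2) = l * l * s := by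
      rw [hsdef, Finset.mul_sum]
      exact Finset.sum_congr rfl fun p _ => by ring
    rw [h1, ← hl, div_mul_cancel₀ _ hs]
  obtain ⟨n, rfl⟩ : ∃ n, t = n + 1 := ⟨t - 1, by omega⟩
  have hcard : Fintype.card Fˣ = Fintype.card F - 1 := Fintype.card_units F
  obtain ⟨r⟩ : Nonempty (Fin n ↪ Fˣ) :=
    Function.Embedding.nonempty_of_card_le (by rw [Fintype.card_fin]; omega)
  have h3 : 2 < ((Finset.univ.map r)ᶜ).card := by
    rw [Finset.card_compl, Finset.card_map, Finset.card_univ, Fintype.card_fin]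
    omega
  by_contra! hcon
  -- Otherwise every unit outside `r` is a root of the quadratic.
  have key : ∀ x : Fˣ, x ∈ (Finset.univ.map r)ᶜ →
      (x : F) * x + x * (∑ j, (r j : F)) +
        ∑ p ∈ Finset.univ.filter (fun p : Fin n × Fin n => p.1 ≤ p.2),
          (r p.1 : F) * (r p.2 : F) = 0 := by
    intro x hx
    rw [← hsum_cons (fun j => (r j : F)) (x : F)]
    apply hcon
    · rw [Fin.cons_injective_iff]
      refine ⟨?_, fun i j h => r.injective (Units.ext h)⟩
      rintro ⟨j, hj⟩
      exact (Finset.mem_compl.1 hx) (Finset.mem_map.2 ⟨j, Finset.mem_univ _, Units.ext hj⟩)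
    · intro i
      refine Fin.cases ?_ (fun j => ?_) i
      · simp
      · simp
  obtain ⟨x, y, z, hx, hy, hz, hxy, hxz, hyz⟩ := Finset.two_lt_card_iff.1 h3
  have ex := key x hx
  have ey := key y hy
  have ez := key z hz
  -- Subtracting the equations pairwise, `x + y` and `x + z` both equal `-Σ r_j`.
  have e1 : (x : F) + y + ∑ j, (r j : F) = 0 :=
    mul_left_cancel₀ (sub_ne_zero.2 fun h => hxy (Units.ext h)) (by linear_combination ex - ey)
  have e2 : (x : F) + z + ∑ j, (r j : F) = 0 :=
    mul_left_cancel₀ (sub_ne_zero.2 fun h => hxz (Units.ext h)) (by linear_combination ex - ez)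
  exact hyz (Units.ext (by linear_combination e1 - e2))
end

section
/- Let F_q be a finite field of characteristic p and let t be an integer with 1 ≤ t < q/2 − 1. Suppose that 4 ∣ t if p = 2, and p ∣ t if p ≠ 2. Then there exist t distinct elements ξ_1, …, ξ_t of F_q^* such that Σ_{1 ≤ i < j ≤ t} ξ_i ξ_j = 0. -/
open Finset

/-!
Write `e₁`, `e₂` for the elementary symmetric functions of a `t`-element set `S ⊆ F`. The
hypotheses on `t` ensure that `t = 0` and `t.choose 2 = 0` in `F`, so that translation acts by
`e₁(S + a) = e₁(S)` and `e₂(S + a) = e₂(S) - a * e₁(S)`. Hence every `S` with `e₁(S) ≠ 0` has a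
translate with `e₂ = 0`, and it remains to arrange that this translate avoids `0`.

If it does not, it is `{0} ∪ T` with `e₂(T) = 0` and `s = e₁(T) ≠ 0`. Replace `0` by some
`y ∉ {0} ∪ T` with `y ≠ -s`; the translate of `T ∪ {y}` with `e₂ = 0` is by `-c`, where
`c = -y * s / (s + y)`, and it avoids `0` unless `c = y` (only for `y = -2 * s`) or `c ∈ T`.
As `y ↦ c` is injective, this rules out at most `t - 1` further values of `y`, so at most
`t + 2 + (t - 1) = 2 * t + 1 < q` values are forbidden altogether.
-/

theorem esymm_two_cons {R : Type*} [CommRing R] (a : R) (m : Multiset R) :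
    (a ::ₘ m).esymm 2 = m.esymm 2 + a * m.sum := by
  simp [Multiset.esymm, Multiset.powersetCard_cons, Multiset.powersetCard_one]
  simpa using Multiset.sum_map_mul_left (s := m) (a := a) (f := id)

theorem esymm_two_map_add {R : Type*} [CommRing R] (a : R) (m : Multiset R) :
    (m.map (· + a)).esymm 2 =
      m.esymm 2 + ((m.card : R) - 1) * a * m.sum + (m.card.choose 2 : R) * a ^ 2 := by
  induction m using Multiset.induction_on with
  | empty => simp [Multiset.esymm]
  | cons b m ih =>
    have hs : (m.map (· + a)).sum = m.sum + m.card * a := by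
      simp [Multiset.sum_map_add]
    rw [Multiset.map_cons, esymm_two_cons, esymm_two_cons, ih, hs, Multiset.card_cons,
      Multiset.sum_cons, Nat.choose_succ_succ' _ 1]
    push_cast [Nat.choose_one_right]
    ring

theorem sum_pairs_eq_esymm {R : Type*} [CommRing R] (n : ℕ) (ξ : Fin n → R) :
    ∑ q ∈ Finset.univ.filter (fun q : Fin n × Fin n => q.1 < q.2), ξ q.1 * ξ q.2 =
      (Finset.univ.val.map ξ).esymm 2 := by
  induction n with
  | zero => simp [Multiset.esymm, Multiset.powersetCard_zero_right]
  | succ n ih =>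
    have h := ih (fun i => ξ i.succ)
    rw [Finset.sum_filter, Fintype.sum_prod_type] at h ⊢
    have hm : (Finset.univ : Finset (Fin (n + 1))).val.map ξ =
        ξ 0 ::ₘ (Finset.univ : Finset (Fin n)).val.map (fun i => ξ i.succ) := by
      simp [Fin.univ_succ, Function.comp_def]
    rw [hm, esymm_two_cons, ← h]
    simp only [Fin.sum_univ_succ, Fin.succ_lt_succ_iff, Fin.succ_pos, Fin.not_lt_zero, if_true,
      if_false, zero_add, ← Finset.mul_sum]
    rw [add_comm]
    rfl

/-- Translating a `t`-element set `U` by `-c`, where `e₂(U) + c * e₁(U) = 0`, makes `e₂` vanish;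
the translate avoids `0` as soon as `c ∉ U`. -/
theorem exists_of_translate {F : Type*} [Field F] (t : ℕ)
    (h1 : (t : F) = 0) (h2 : (t.choose 2 : F) = 0) (U : Finset F) (hU : U.card = t) (c : F)
    (hc : c ∉ U) (he : U.val.esymm 2 + c * U.val.sum = 0) :
    ∃ ξ : Fin t → F, Function.Injective ξ ∧ (∀ i, ξ i ≠ 0) ∧
      ∑ q ∈ Finset.univ.filter (fun q : Fin t × Fin t => q.1 < q.2),
          ξ q.1 * ξ q.2 = 0 := by
  let e : Fin t ≃ U := (U.equivFinOfCardEq hU).symm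
  have hm : (Finset.univ : Finset (Fin t)).val.map (fun i => (e i : F)) = U.val := by
    have : Finset.univ.map (e.toEmbedding.trans (Function.Embedding.subtype _)) = U := by
      rw [← Finset.map_map, Finset.map_univ_equiv]
      exact Finset.attach_map_val
    exact congrArg Finset.val this
  refine ⟨fun i => (e i : F) + -c, fun i j h => ?_, fun i h => ?_, ?_⟩
  · exact e.injective (Subtype.ext (add_right_cancel h))
  · apply hc
    rw [← add_neg_eq_zero.mp h]
    exact (e i).2
  · have hmm : (Finset.univ : Finset (Fin t)).val.map (fun i => (e i : F) + -c) =
        U.val.map (· + -c) := by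
      rw [← hm, Multiset.map_map]; rfl
    rw [sum_pairs_eq_esymm t (fun i => (e i : F) + -c), hmm, esymm_two_map_add]
    have : U.val.card = t := hU
    rw [this, h1, h2]
    linear_combination he

theorem exists_sum_ne_zero {F : Type*} [Field F] [Fintype F] (t : ℕ) (ht1 : 1 ≤ t)
    (ht : t < Fintype.card F) : ∃ S : Finset F, S.card = t ∧ S.val.sum ≠ 0 := by
  classical
  obtain ⟨T, -, hT⟩ := Finset.exists_subset_card_eq
    (s := (Finset.univ : Finset F)) (n := t - 1) (by rw [Finset.card_univ]; omega)
  -- at least two elements lie outside `T`, and at most one of them makes the sum vanish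
  obtain ⟨y, hy⟩ : ∃ y, y ∉ insert (-T.val.sum) T := by
    by_contra! h
    have h3 : (Finset.univ : Finset F).card ≤ (insert (-T.val.sum) T).card :=
      Finset.card_le_card fun y _ => h y
    have := Finset.card_insert_le (-T.val.sum) T
    rw [Finset.card_univ] at h3
    omega
  rw [Finset.mem_insert, not_or] at hy
  refine ⟨insert y T, by rw [Finset.card_insert_of_notMem hy.2]; omega, ?_⟩
  rw [Finset.insert_val_of_notMem hy.2, Multiset.sum_cons]
  exact fun h => hy.1 (eq_neg_of_add_eq_zero_left h)

theorem choose_two_cast_eq_zero {F : Type*} [Field F] (p : ℕ) [CharP F p] (t : ℕ)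
    (h2 : p = 2 → 4 ∣ t) (h1 : (t : F) = 0) : (t.choose 2 : F) = 0 := by
  by_cases hp : p = 2
  · obtain ⟨k, rfl⟩ := h2 hp
    rw [CharP.cast_eq_zero_iff F p, hp, Nat.choose_two_right]
    refine ⟨k * (4 * k - 1), Nat.div_eq_of_eq_mul_left two_pos ?_⟩
    ring
  · have h20 : (2 : F) ≠ 0 := by
      intro h
      have hd : p ∣ 2 := (CharP.cast_eq_zero_iff F p 2).mp (by exact_mod_cast h)
      rcases (Nat.dvd_prime Nat.prime_two).mp hd with h' | h'
      · exact CharP.ringChar_ne_one (R := F) (by rw [ringChar.eq F p, h'])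
      · exact hp h'
    have h : (t.choose 2 * 2 : F) = 0 := by
      have := Nat.div_mul_cancel (Nat.even_mul_pred_self t).two_dvd
      rw [← Nat.choose_two_right] at this
      have h3 := congrArg (Nat.cast : ℕ → F) this
      push_cast at h3
      rw [h3, h1, zero_mul]
    exact (mul_eq_zero.mp h).resolve_right h20

/-- let `F_q` have characteristic `p` and let `1 ≤ t < q/2 - 1`
(expressed as `2 * t < q - 2`, equivalently `2 * t + 2 < q`). Suppose `4 ∣ t`
if `p = 2` and `p ∣ t` if `p ≠ 2`. Then there exist `t` distinct nonzero
elements `ξ_1, …, ξ_t` of `F_q` with `Σ_{1 ≤ i < j ≤ t} ξ_i ξ_j = 0`. -/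
theorem stmt_15 {F : Type*} [Field F] [Fintype F]
    (p : ℕ) [Fact p.Prime] [CharP F p]
    (t : ℕ) (ht1 : 1 ≤ t) (ht : 2 * t + 2 < Fintype.card F)
    (h2 : p = 2 → 4 ∣ t) (hodd : p ≠ 2 → p ∣ t) :
    ∃ ξ : Fin t → F, Function.Injective ξ ∧ (∀ i, ξ i ≠ 0) ∧
      ∑ q ∈ Finset.univ.filter (fun q : Fin t × Fin t => q.1 < q.2),
          ξ q.1 * ξ q.2 = 0 := by
  classical
  have h1 : (t : F) = 0 := by
    rw [CharP.cast_eq_zero_iff F p]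
    by_cases hp : p = 2
    · rw [hp]; exact dvd_trans (by norm_num) (h2 hp)
    · exact hodd hp
  have hch := choose_two_cast_eq_zero (F := F) p t h2 h1
  obtain ⟨S, hS, hs⟩ := exists_sum_ne_zero (F := F) t ht1 (by omega)
  obtain ⟨c, he⟩ : ∃ c : F, S.val.esymm 2 + c * S.val.sum = 0 :=
    ⟨-S.val.esymm 2 / S.val.sum, by field_simp; ring⟩
  by_cases hc : c ∉ S
  · exact exists_of_translate t h1 hch S hS c hc he
  rw [not_not] at hc
  -- `T` consists of the nonzero elements of `S - c`
  set T : Finset F := (S.erase c).map (addRightEmbedding (-c)) with hTdef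
  have hTcard : T.card + 1 = t := by
    rw [hTdef, Finset.card_map, Finset.card_erase_add_one hc, hS]
  have hval : (0 : F) ::ₘ T.val = S.val.map (· + -c) := by
    conv_rhs => rw [← Multiset.cons_erase (Finset.mem_val.mpr hc), Multiset.map_cons,
      add_neg_cancel]
    rw [hTdef, Finset.map_val, Finset.erase_val]
    rfl
  have hSc : S.val.card = t := hS
  have hT2 : T.val.esymm 2 = 0 := by
    have h := esymm_two_cons 0 T.val
    rw [hval, esymm_two_map_add, hSc, h1, hch] at h
    linear_combination -h + he
  have hTs : T.val.sum = S.val.sum := by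
    have h := congrArg Multiset.sum hval
    rw [Multiset.sum_cons, zero_add, Multiset.sum_map_add, Multiset.map_id', Multiset.map_const',
      Multiset.sum_replicate, hSc, nsmul_eq_mul, h1, zero_mul, add_zero] at h
    exact h
  set s := S.val.sum with hsdef
  obtain ⟨y, hyT, hy0, hy1, hy2, hyc⟩ : ∃ y : F, y ∉ T ∧ y ≠ 0 ∧ y ≠ -s ∧ y ≠ -(2 * s) ∧
      -(y * s) / (s + y) ∉ T := by
    by_contra! h
    -- `y ↦ -(y * s) / (s + y)` is an involution away from `-s`
    have hsub : (Finset.univ : Finset F) ⊆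
        insert 0 (insert (-s) (insert (-(2 * s)) (T ∪ T.image fun z => -(z * s) / (s + z)))) := by
      intro y _
      simp only [Finset.mem_insert, Finset.mem_union, Finset.mem_image]
      by_contra! hy
      obtain ⟨a0, a1, a2, a3, a4⟩ := hy
      refine a4 _ (h y a3 a0 a1 a2) ?_
      have hsy : s + y ≠ 0 := fun h => a1 (eq_neg_of_add_eq_zero_right h)
      have hw : s + -(y * s) / (s + y) = s * s / (s + y) := by field_simp; ring
      rw [hw]
      field_simp
    have hle := Finset.card_le_card hsub
    rw [Finset.card_univ] at hle
    have b1 := Finset.card_insert_le (0 : F)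
      (insert (-s) (insert (-(2 * s)) (T ∪ T.image fun z => -(z * s) / (s + z))))
    have b2 := Finset.card_insert_le (-s)
      (insert (-(2 * s)) (T ∪ T.image fun z => -(z * s) / (s + z)))
    have b3 := Finset.card_insert_le (-(2 * s)) (T ∪ T.image fun z => -(z * s) / (s + z))
    have b4 := Finset.card_union_le T (T.image fun z => -(z * s) / (s + z))
    have b5 := Finset.card_image_le (s := T) (f := fun z => -(z * s) / (s + z))
    omega
  have hsy : s + y ≠ 0 := fun h => hy1 (eq_neg_of_add_eq_zero_right h)
  refine exists_of_translate t h1 hch (insert y T)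
    (by rw [Finset.card_insert_of_notMem hyT, hTcard]) (-(y * s) / (s + y)) ?_ ?_
  · rw [Finset.mem_insert, not_or]
    refine ⟨fun h => hy2 ?_, hyc⟩
    rw [div_eq_iff hsy] at h
    apply mul_left_cancel₀ hy0
    linear_combination -h
  · rw [Finset.insert_val_of_notMem hyT, esymm_two_cons, Multiset.sum_cons, hT2, hTs]
    field_simp
    ring
end

section
/- Let F_q be a finite field of odd characteristic p, let r, r_1, μ be nonzero elements of F_q, let b, c ∈ F_q, and set A = { α²/μ − b²r²/μ + 2 c r_1 : α ∈ F_q }. If t is an even integer with 2 < t < (q+1)/2, then there exist t distinct elements y_1, …, y_t of F_q^* such that (y_1 + ⋯ + y_t)² − r·(y_1² + ⋯ + y_t²) ∈ A. -/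
/-!
Let `t = 2k`. The `y_i` are taken to be the square roots `±x` of `k` distinct nonzero squares, so
that `∑ y_i = 0` and `∑ y_i² = 2σ`, where `σ` is the sum of these squares. Membership in `A` then
says that `-2rμσ + d` is a square in `F`, with `d = b²r² - 2cr₁μ`.

Fix `k - 1` distinct nonzero squares forming a set `B`, and look for a last square `x²`: with
`e = -2rμ ≠ 0` and `g = e ∑ B + d`, the element `e x² + g` has to be a square. Since two
`(k-1)`-subsets of a `k`-set have different sums, `B` can be chosen so that `g ≠ 0`. The conic
`z² = e x² + g` is then nondegenerate, and at least `(q - 1) / 2` values of `x` occur on it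
(`card_le_two_mul_card_isSquare`). The forbidden values `x = 0` and `x² ∈ B` number at most
`2k - 1 < (q - 1) / 2`, so an admissible `x` remains.
-/

open Finset

section
variable {F : Type*} [Field F]

/-- Two-element fibres: if `u ≠ 0` and `g / u - u = g / v - v`, then `v = u` or `v = -g / u`. -/
lemma eq_or_eq_of_div_sub {g u v : F} (hu : u ≠ 0) (hv : v ≠ 0)
    (h : g / u - u = g / v - v) : v = u ∨ v = -g / u := by
  have h1 : (v - u) * (u * v + g) = 0 := by
    field_simp at h
    linear_combination h
  rcases mul_eq_zero.1 h1 with h2 | h2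
  · exact Or.inl (sub_eq_zero.1 h2)
  · right
    rw [eq_div_iff hu]
    linear_combination h2

variable [Fintype F]

open Classical in
/-- At least `(q - 1) / 2` elements `x` are first coordinates of points of the conic
`z² = e x² + g`. If `e = ε²`, the conic factors as `(z - ε x)(z + ε x) = g`, and `u = z - ε x`
parametrizes it. If `e` is not a square, the `x` which do *not* occur satisfy `e x² + g = e w²`,
and the same factorization, applied to `(w - x)(w + x) = g / e`, bounds their number. -/
lemma card_le_two_mul_card_isSquare (h2 : (2 : F) ≠ 0) {e g : F} (he : e ≠ 0) (hg : g ≠ 0) :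
    Fintype.card F ≤ 2 * #{x : F | IsSquare (e * x ^ 2 + g)} + 1 := by
  have hcard : #((univ : Finset F).erase 0) = Fintype.card F - 1 := by
    rw [card_erase_of_mem (mem_univ _), card_univ]
  have hpos : 0 < Fintype.card F := Fintype.card_pos
  by_cases hsq : IsSquare e
  · obtain ⟨ε, rfl⟩ := hsq
    have hε : ε ≠ 0 := fun h => he (by simp [h])
    let f : F → F := fun u => (g / u - u) / (2 * ε)
    have hfib : ∀ a ∈ ((univ : Finset F).erase 0).image f,
        #{u ∈ (univ : Finset F).erase 0 | f u = a} ≤ 2 := by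
      intro a ha
      obtain ⟨u, hu, rfl⟩ := mem_image.1 ha
      have hu0 : u ≠ 0 := ne_of_mem_erase hu
      refine (card_le_card (t := {u, -g / u}) ?_).trans card_le_two
      intro v hv
      obtain ⟨hv, hvu⟩ := mem_filter.1 hv
      have hv0 : v ≠ 0 := ne_of_mem_erase hv
      have : g / u - u = g / v - v := by
        have h2ε : 2 * ε ≠ 0 := mul_ne_zero h2 hε
        exact ((div_left_inj' h2ε).1 hvu).symm
      simpa using eq_or_eq_of_div_sub hu0 hv0 this
    have h1 := card_le_mul_card_image _ 2 hfib
    have h3 : ((univ : Finset F).erase 0).image f ⊆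
        ({x : F | IsSquare (ε * ε * x ^ 2 + g)} : Finset F) := by
      intro x hx
      obtain ⟨u, hu, rfl⟩ := mem_image.1 hx
      have hu0 : u ≠ 0 := ne_of_mem_erase hu
      refine mem_filter.2 ⟨mem_univ _, (g / u + u) / 2, ?_⟩
      simp only [f]
      field_simp
      ring
    have h4 := card_le_card h3
    omega
  · have hw : ∀ x : F, ∃ w : F, ¬ IsSquare (e * x ^ 2 + g) → w ≠ 0 ∧ e * x ^ 2 + g = e * w ^ 2 := by
      intro x
      by_cases hx : IsSquare (e * x ^ 2 + g)
      · exact ⟨0, fun h => absurd hx h⟩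
      -- the quotient of two nonsquares is a square
      · have h5 : IsSquare ((e * x ^ 2 + g) * e) := by
          have hx0 : e * x ^ 2 + g ≠ 0 := fun h => hx (by simp [h])
          have hF : ringChar F ≠ 2 := by
            intro h
            apply h2
            have := ringChar.Nat.cast_ringChar (R := F)
            rw [h] at this
            exact_mod_cast this
          rw [← quadraticChar_one_iff_isSquare (mul_ne_zero hx0 he), map_mul,
            quadraticChar_neg_one_iff_not_isSquare.2 hx,
            quadraticChar_neg_one_iff_not_isSquare.2 hsq]
          norm_num
        obtain ⟨s, hs⟩ := h5
        refine ⟨s / e, fun _ => ⟨?_, ?_⟩⟩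
        · intro h
          rcases div_eq_zero_iff.1 h with h | h
          · rw [h, mul_zero] at hs
            rcases mul_eq_zero.1 hs with h' | h'
            · exact hx (by simp [h'])
            · exact he h'
          · exact he h
        · field_simp
          linear_combination hs
    choose w hw using hw
    let D : Finset F := {x : F | ¬ IsSquare (e * x ^ 2 + g)}
    have hD : ∀ x ∈ D, w x ≠ 0 ∧ e * x ^ 2 + g = e * w x ^ 2 :=
      fun x hx => hw x (mem_filter.1 hx).2
    -- `u = ±w - x` satisfies `(g / e) / u - u = 2 x`, so it determines `x`
    have key : ∀ x w : F, e * x ^ 2 + g = e * w ^ 2 → w - x ≠ 0 ∧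
        g / e / (w - x) - (w - x) = 2 * x := by
      intro x w h
      have h0 : w - x ≠ 0 := by
        intro h0
        apply hg
        linear_combination h + e * (w + x) * h0
      refine ⟨h0, ?_⟩
      field_simp
      linear_combination h
    have hp : ∀ x ∈ D, w x - x ≠ 0 ∧ g / e / (w x - x) - (w x - x) = 2 * x :=
      fun x hx => key x _ (hD x hx).2
    have hm : ∀ x ∈ D, -w x - x ≠ 0 ∧ g / e / (-w x - x) - (-w x - x) = 2 * x :=
      fun x hx => key x _ (by rw [neg_sq]; exact (hD x hx).2)
    have i1 : #(D.image fun x => w x - x) = #D := by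
      refine card_image_of_injOn fun x hx y hy hxy => mul_left_cancel₀ h2 ?_
      rw [← (hp x hx).2, ← (hp y hy).2]
      rw [hxy]
    have i2 : #(D.image fun x => -w x - x) = #D := by
      refine card_image_of_injOn fun x hx y hy hxy => mul_left_cancel₀ h2 ?_
      rw [← (hm x hx).2, ← (hm y hy).2]
      rw [hxy]
    have hdisj : Disjoint (D.image fun x => w x - x) (D.image fun x => -w x - x) := by
      rw [disjoint_left]
      intro a ha hb
      obtain ⟨x, hx, rfl⟩ := mem_image.1 ha
      obtain ⟨y, hy, hxy⟩ := mem_image.1 hb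
      have : y = x := by
        refine mul_left_cancel₀ h2 ?_
        rw [← (hm y hy).2, ← (hp x hx).2, hxy]
      subst this
      apply (hD y hx).1
      refine mul_left_cancel₀ h2 ?_
      linear_combination -hxy
    have hsub : (D.image fun x => w x - x) ∪ (D.image fun x => -w x - x) ⊆
        (univ : Finset F).erase 0 := by
      intro a ha
      refine mem_erase.2 ⟨?_, mem_univ _⟩
      rcases mem_union.1 ha with ha | ha
      · obtain ⟨x, hx, rfl⟩ := mem_image.1 ha
        exact (hp x hx).1
      · obtain ⟨x, hx, rfl⟩ := mem_image.1 ha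
        exact (hm x hx).1
    have h6 := card_le_card hsub
    rw [card_union_of_disjoint hdisj, i1, i2, hcard] at h6
    have h7 : #{x : F | IsSquare (e * x ^ 2 + g)} + #D = Fintype.card F := by
      rw [← card_univ]
      exact card_filter_add_card_filter_not _
    omega

open Classical in
/-- The nonzero squares of `F`. -/
noncomputable def nonzeroSquares (F : Type*) [Field F] [Fintype F] : Finset F :=
  {s : F | s ≠ 0 ∧ IsSquare s}

lemma mem_nonzeroSquares {s : F} : s ∈ nonzeroSquares F ↔ s ≠ 0 ∧ IsSquare s := by
  simp [nonzeroSquares]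

open Classical in
lemma card_sqrt_le (C : Finset F) : #{x : F | x ^ 2 ∈ C} ≤ 2 * #C := by
  have hle : ∀ a ∈ C, #{x ∈ ({x : F | x ^ 2 ∈ C} : Finset F) | x ^ 2 = a} ≤ 2 := by
    intro a _
    rcases ({x ∈ ({x : F | x ^ 2 ∈ C} : Finset F) | x ^ 2 = a}).eq_empty_or_nonempty with h | h
    · simp [h]
    · obtain ⟨u, hu⟩ := h
      refine (card_le_card (t := {u, -u}) ?_).trans card_le_two
      intro v hv
      have h1 := (mem_filter.1 hu).2
      have h2 := (mem_filter.1 hv).2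
      simpa using sq_eq_sq_iff_eq_or_eq_neg.1 (h2.trans h1.symm)
  exact card_le_mul_card_image_of_maps_to (f := fun x => x ^ 2)
    (fun x hx => (mem_filter.1 hx).2) 2 hle

lemma card_le_two_mul_card_nonzeroSquares :
    Fintype.card F ≤ 2 * #(nonzeroSquares F) + 1 := by
  classical
  have h := card_sqrt_le (nonzeroSquares F)
  have hsub : (univ : Finset F).erase 0 ⊆ ({x : F | x ^ 2 ∈ nonzeroSquares F} : Finset F) := by
    intro x hx
    refine mem_filter.2 ⟨mem_univ _, mem_nonzeroSquares.2 ⟨?_, IsSquare.sq x⟩⟩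
    exact pow_ne_zero 2 (ne_of_mem_erase hx)
  have := card_le_card hsub
  rw [card_erase_of_mem (mem_univ _), card_univ] at this
  omega

/-- There are `k` distinct nonzero squares whose sum `σ` makes `e σ + d` a square. -/
lemma exists_squares (h2 : (2 : F) ≠ 0) {e : F} (he : e ≠ 0) (d : F) {k : ℕ} (hk : 2 ≤ k)
    (hkq : 4 * k < Fintype.card F) :
    ∃ C ⊆ nonzeroSquares F, #C = k ∧ IsSquare (e * ∑ s ∈ C, s + d) := by
  classical
  have hS := card_le_two_mul_card_nonzeroSquares (F := F)
  obtain ⟨C, hCS, hC⟩ := exists_subset_card_eq (s := nonzeroSquares F) (n := k) (by omega)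
  obtain ⟨B, hBS, hB, hg⟩ : ∃ B ⊆ nonzeroSquares F, #B = k - 1 ∧ e * ∑ s ∈ B, s + d ≠ 0 := by
    obtain ⟨a, ha, a', ha', hne⟩ := one_lt_card.1 (show 1 < #C by omega)
    by_cases h : e * ∑ s ∈ C.erase a, s + d = 0
    · refine ⟨C.erase a', (erase_subset _ _).trans hCS, by rw [card_erase_of_mem ha', hC], ?_⟩
      intro h'
      have h1 := sum_erase_add C (fun s => s) ha
      have h3 := sum_erase_add C (fun s => s) ha'
      apply hne
      apply mul_left_cancel₀ he
      linear_combination e * h1 - e * h3 - h + h'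
    · exact ⟨C.erase a, (erase_subset _ _).trans hCS, by rw [card_erase_of_mem ha, hC], h⟩
  have hX := card_le_two_mul_card_isSquare h2 he hg
  have hbad : #(insert 0 ({x : F | x ^ 2 ∈ B} : Finset F)) ≤ 2 * (k - 1) + 1 := by
    refine (card_insert_le _ _).trans ?_
    have := card_sqrt_le B
    omega
  obtain ⟨x, hx, hxb⟩ : ∃ x ∈ ({x : F | IsSquare (e * x ^ 2 + (e * ∑ s ∈ B, s + d))} : Finset F),
      x ∉ insert 0 ({x : F | x ^ 2 ∈ B} : Finset F) :=
    exists_mem_notMem_of_card_lt_card (by omega)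
  simp only [mem_insert, mem_filter, mem_univ, true_and, not_or] at hx hxb
  refine ⟨insert (x ^ 2) B, insert_subset ?_ hBS, ?_, ?_⟩
  · exact mem_nonzeroSquares.2 ⟨pow_ne_zero 2 hxb.1, IsSquare.sq x⟩
  · rw [card_insert_of_notMem hxb.2]
    omega
  · rw [sum_insert hxb.2]
    convert hx using 1
    ring

/-- The witness `Y` consists of all square roots of the elements of `C`, two for each. -/
lemma exists_roots (h2 : (2 : F) ≠ 0) {C : Finset F} (hC : C ⊆ nonzeroSquares F) :
    ∃ Y : Finset F, #Y = 2 * #C ∧ (∀ y ∈ Y, y ≠ 0) ∧ ∑ y ∈ Y, y = 0 ∧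
      ∑ y ∈ Y, y ^ 2 = 2 * ∑ s ∈ C, s := by
  classical
  have hρ : ∀ s : F, ∃ x : F, s ∈ C → x ≠ 0 ∧ x ^ 2 = s := by
    intro s
    by_cases hs : s ∈ C
    · obtain ⟨h0, x, hx⟩ := mem_nonzeroSquares.1 (hC hs)
      exact ⟨x, fun _ => ⟨fun h => h0 (by simp [hx, h]), by rw [hx, sq]⟩⟩
    · exact ⟨0, fun h => absurd h hs⟩
  choose ρ hρ using hρ
  have i1 : Set.InjOn ρ C := by
    intro a ha b hb hab
    rw [← (hρ a ha).2, ← (hρ b hb).2, hab]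
  have i2 : Set.InjOn (fun s => -ρ s) C := fun a ha b hb hab => i1 ha hb (neg_injective hab)
  have hdisj : Disjoint (C.image ρ) (C.image fun s => -ρ s) := by
    rw [disjoint_left]
    intro z hz hz'
    obtain ⟨a, ha, rfl⟩ := mem_image.1 hz
    obtain ⟨b, hb, hab⟩ := mem_image.1 hz'
    have : b = a := by
      rw [← (hρ a ha).2, ← (hρ b hb).2, ← hab, neg_sq]
    subst this
    apply (hρ b ha).1
    refine mul_left_cancel₀ h2 ?_
    linear_combination -hab
  refine ⟨C.image ρ ∪ C.image fun s => -ρ s, ?_, ?_, ?_, ?_⟩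
  · rw [card_union_of_disjoint hdisj, card_image_of_injOn i1, card_image_of_injOn i2]
    ring
  · intro y hy
    rcases mem_union.1 hy with hy | hy
    · obtain ⟨s, hs, rfl⟩ := mem_image.1 hy
      exact (hρ s hs).1
    · obtain ⟨s, hs, rfl⟩ := mem_image.1 hy
      exact neg_ne_zero.2 (hρ s hs).1
  · rw [sum_union hdisj, sum_image i1, sum_image i2, sum_neg_distrib, add_neg_cancel]
  · rw [sum_union hdisj, sum_image i1, sum_image i2]
    simp only [neg_sq]
    rw [sum_congr rfl fun s hs => (hρ s hs).2]
    ring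

end

/-- let `F_q` have odd characteristic `p`, let `r, r₁, μ` be
nonzero, `b, c ∈ F_q`, and `A = {α²/μ - b²r²/μ + 2cr₁ : α ∈ F_q}`. If `t` is
even with `2 < t < (q+1)/2` (the latter expressed as `2 * t < q + 1`), then
there exist `t` distinct nonzero elements `y_1, …, y_t` of `F_q` with
`(y_1 + ⋯ + y_t)² - r (y_1² + ⋯ + y_t²) ∈ A`. -/
theorem stmt_17 {F : Type*} [Field F] [Fintype F]
    (p : ℕ) [Fact p.Prime] [CharP F p] (hp : p ≠ 2)
    (r r₁ μ : F) (hr : r ≠ 0) (hr₁ : r₁ ≠ 0) (hμ : μ ≠ 0) (b c : F)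
    (t : ℕ) (ht2 : 2 < t) (ht : 2 * t < Fintype.card F + 1) (hteven : 2 ∣ t) :
    ∃ y : Fin t → F, Function.Injective y ∧ (∀ i, y i ≠ 0) ∧
      (∑ i, y i) ^ 2 - r * ∑ i, (y i) ^ 2 ∈
        {z : F | ∃ α : F, z = α ^ 2 / μ - b ^ 2 * r ^ 2 / μ + 2 * c * r₁} := by
  have hchar : ringChar F ≠ 2 := by rwa [ringChar.eq F p]
  have h2 : (2 : F) ≠ 0 := Ring.two_ne_zero hchar
  have hodd : Fintype.card F % 2 = 1 := FiniteField.odd_card_of_char_ne_two hchar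
  obtain ⟨k, rfl⟩ := hteven
  obtain ⟨C, hCS, hCk, α, hα⟩ := exists_squares h2 (e := -(2 * r * μ))
    (neg_ne_zero.2 (mul_ne_zero (mul_ne_zero h2 hr) hμ)) (b ^ 2 * r ^ 2 - 2 * c * r₁ * μ)
    (k := k) (by omega) (by omega)
  obtain ⟨Y, hY, hY0, hY1, hY2⟩ := exists_roots h2 hCS
  rw [hCk] at hY
  let φ := (Y.equivFinOfCardEq hY).symm
  have hsum : ∀ f : F → F, ∑ i, f (φ i) = ∑ y ∈ Y, f y := fun f => by
    rw [Equiv.sum_comp φ (fun y : Y => f y), sum_coe_sort]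
  refine ⟨fun i => φ i, fun i j hij => φ.injective (Subtype.ext hij),
    fun i => hY0 _ (φ i).2, α, ?_⟩
  rw [hsum fun y => y, hsum fun y => y ^ 2, hY1, hY2]
  field_simp
  linear_combination hα
end

section
/- Let F_q be a finite field of odd characteristic p, and let k be an integer with 3 < k+2 < q−3, k+2 ≠ (q−1)/2, and k+2 ≠ (q+1)/2. Then for every ζ ∈ F_q^* there exist k+2 distinct elements y_1, …, y_{k+2} of F_q such that y_1 + ⋯ + y_{k+2} = 0 and y_1² + ⋯ + y_{k+2}² = ζ. -/
open Finset

/-!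
Write `q` for the cardinality of `F` and `m = k + 2`. Since `∑ x` and `∑ x²` over all of `F` vanish,
passing to the complement exchanges `(m, ζ)` with `(q - m, -ζ)`; as `m ≠ (q ± 1) / 2`, one may
therefore assume `2 * m ≤ q - 3` (`exists_finset_of_two_mul_card_le`).

In that range one looks for a set closed under negation, `R ∪ -R` or `R ∪ -R ∪ {0}`, with `R`
consisting of `j = m / 2` elements whose squares are distinct and nonzero. Its sum is `0` and its sum
of squares is `2 * ∑ x ∈ R, x²`. Replacing `R` by `c • R` multiplies the latter by `c²`, so only
the class of `∑ x ∈ R, x²` modulo nonzero squares matters, and both classes must be reached.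

If `R₀` has `j - 1` elements and `t = ∑ x ∈ R₀, x²` is nonzero, one adds a suitable new square `b`.
The number of nonzero squares `b` with `t + b` in a prescribed class is at least `(q - 5) / 4`,
by the evaluation `∑ b, χ (b * (b + t)) = -1` for the quadratic character `χ`. This exceeds
`j - 1`, so some such `b` is not already the square of an element of `R₀` (`exists_new_square`).
-/

section

variable {F : Type*} [Field F] [Fintype F] [DecidableEq F]

/-- The substitution `b ↦ t / b` turns `χ (b * (b + t))` into `χ (1 + t / b)`, and the latter runs
over all values of `χ` except `χ 1 = 1`. -/
lemma sum_quadraticChar_mul_add (hF : ringChar F ≠ 2) {t : F} (ht : t ≠ 0) :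
    ∑ b : F, quadraticChar F b * quadraticChar F (b + t) = -1 := by
  have h0 : ∑ c : F, quadraticChar F (1 + c) = 0 := by
    rw [← quadraticChar_sum_zero hF]
    exact Equiv.sum_comp (Equiv.addLeft (1 : F)) (fun c => quadraticChar F c)
  have h1 : ∑ b : F, quadraticChar F (1 + t * b⁻¹) = 0 := by
    rw [← h0]
    exact Equiv.sum_comp ((Equiv.inv F).trans (Equiv.mulLeft₀ t ht))
      (fun c => quadraticChar F (1 + c))
  rw [← Finset.add_sum_erase _ _ (mem_univ (0 : F))] at h1 ⊢
  have h2 : ∑ b ∈ univ.erase (0 : F), quadraticChar F b * quadraticChar F (b + t) =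
      ∑ b ∈ univ.erase (0 : F), quadraticChar F (1 + t * b⁻¹) := by
    refine sum_congr rfl fun b hb => ?_
    have hb0 : b ≠ 0 := ne_of_mem_erase hb
    have h3 : b * (b + t) = b ^ 2 * (1 + t * b⁻¹) := by field_simp
    rw [← map_mul, h3, map_mul, quadraticChar_sq_one' hb0, one_mul]
  rw [h2]
  simp at h1 ⊢
  linarith

/-- If every square `x²` with `z * (x² + t)` a nonzero square lay in `T`, then
`∑ b, (1 + χ b) * (1 + χ (z * (b + t))) = q - χ z` would be at most `4 * #T + 4`, where the final
`4` bounds the terms at `b = 0` and `b = -t`. -/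
lemma exists_new_square (hF : ringChar F ≠ 2) {t z : F} (ht : t ≠ 0) (hz : z ≠ 0)
    (T : Finset F) (hT : 4 * #T + 5 < Fintype.card F) :
    ∃ x : F, x ≠ 0 ∧ x ^ 2 ∉ T ∧ quadraticChar F (z * (x ^ 2 + t)) = 1 := by
  by_contra! hcon
  have hsum : ∑ b : F, (1 + quadraticChar F b) * (1 + quadraticChar F (z * (b + t))) =
      Fintype.card F - quadraticChar F z := by
    have e : ∀ b : F, (1 + quadraticChar F b) * (1 + quadraticChar F (z * (b + t))) =
        1 + quadraticChar F b + quadraticChar F z * quadraticChar F (b + t) +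
        quadraticChar F z * (quadraticChar F b * quadraticChar F (b + t)) := by
      intro b
      rw [map_mul]
      ring
    have h0 : ∑ b : F, quadraticChar F (b + t) = 0 := by
      rw [← quadraticChar_sum_zero hF]
      exact Equiv.sum_comp (Equiv.addRight t) (fun c => quadraticChar F c)
    simp_rw [e, sum_add_distrib, ← mul_sum, sum_quadraticChar_mul_add hF ht, h0,
      quadraticChar_sum_zero hF]
    simp
    ring
  have hle1 : ∀ a : F, quadraticChar F a ≤ 1 := by
    intro a
    by_cases ha : a = 0
    · simp [ha]
    · rcases quadraticChar_dichotomy ha with h | h <;> simp [h]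
  have hbound : ∀ b : F, (1 + quadraticChar F b) * (1 + quadraticChar F (z * (b + t))) ≤
      (if b ∈ T then 4 else 0) + (if b = 0 then 2 else 0) + (if b = -t then 2 else 0) := by
    intro b
    have hn1 : (0 : ℤ) ≤ if b ∈ T then 4 else 0 := by split_ifs <;> norm_num
    have hn2 : (0 : ℤ) ≤ if b = 0 then 2 else 0 := by split_ifs <;> norm_num
    have hn3 : (0 : ℤ) ≤ if b = -t then 2 else 0 := by split_ifs <;> norm_num
    by_cases hb : b = 0
    · subst hb
      have := hle1 (z * (0 + t))
      rw [if_pos rfl, MulChar.map_zero]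
      linarith
    by_cases hbt : b = -t
    · have := hle1 b
      have h5 : z * (b + t) = 0 := by rw [hbt]; ring
      rw [h5, if_pos hbt, MulChar.map_zero]
      linarith
    have hzb : z * (b + t) ≠ 0 :=
      mul_ne_zero hz fun h => hbt (eq_neg_of_add_eq_zero_left h)
    rcases quadraticChar_dichotomy hb with h | h
    · rcases quadraticChar_dichotomy hzb with h' | h'
      · obtain ⟨x, hx⟩ := (quadraticChar_one_iff_isSquare hb).1 h
        have hbT : b ∈ T := by
          by_contra hbT
          have hx2 : b = x ^ 2 := by rw [hx]; ring
          refine hcon x ?_ (hx2 ▸ hbT) (hx2 ▸ h')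
          rintro rfl
          exact hb (by simpa using hx)
        rw [h, h', if_pos hbT]
        linarith
      · rw [h']
        linarith
    · rw [h]
      linarith
  have htot := sum_le_sum fun b (_ : b ∈ (univ : Finset F)) => hbound b
  rw [hsum, sum_add_distrib, sum_add_distrib] at htot
  have hz1 : quadraticChar F z ≤ 1 := hle1 z
  simp only [sum_ite_mem, univ_inter, sum_const, sum_ite_eq', mem_univ, if_true,
    nsmul_eq_mul] at htot
  have : (4 * #T + 5 : ℤ) < Fintype.card F := by exact_mod_cast hT
  linarith

/-- Adjoins to `R` an element whose square is new, choosing the class modulo squares of the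
resulting sum of squares. The condition `∀ x ∈ R, ∀ y ∈ R, x + y ≠ 0` says that `R` and `-R` are
disjoint; in particular it excludes `0` from `R`. -/
lemma exists_insert (hF : ringChar F ≠ 2) {z : F} (hz : z ≠ 0) (R : Finset F)
    (hR : ∀ x ∈ R, ∀ y ∈ R, x + y ≠ 0) (hs : ∑ x ∈ R, x ^ 2 ≠ 0)
    (hc : 4 * #R + 5 < Fintype.card F) :
    ∃ S : Finset F, #S = #R + 1 ∧ (∀ x ∈ S, ∀ y ∈ S, x + y ≠ 0) ∧
      quadraticChar F (z * ∑ x ∈ S, x ^ 2) = 1 := by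
  have h2 : (2 : F) ≠ 0 := Ring.two_ne_zero hF
  have hcard : #(R.image (· ^ 2)) ≤ #R := card_image_le
  obtain ⟨x, hx0, hxT, hχ⟩ := exists_new_square hF hs hz (R.image (· ^ 2)) (by omega)
  have hxR : x ∉ R := fun h => hxT (mem_image_of_mem _ h)
  have hxy : ∀ y ∈ R, x + y ≠ 0 := by
    intro y hy h
    refine hxT (mem_image.2 ⟨y, hy, ?_⟩)
    rw [eq_neg_of_add_eq_zero_left h]
    ring
  refine ⟨insert x R, card_insert_of_notMem hxR, ?_, ?_⟩
  · intro a ha b hb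
    rcases mem_insert.1 ha with rfl | haR <;> rcases mem_insert.1 hb with rfl | hbR
    · rw [← two_mul]
      exact mul_ne_zero h2 hx0
    · exact hxy b hbR
    · rw [add_comm]
      exact hxy a haR
    · exact hR a haR b hbR
  · rw [sum_insert hxR]
    exact hχ

lemma exists_sum_sq_ne_zero (hF : ringChar F ≠ 2) (i : ℕ) (hi : 4 * i + 5 < Fintype.card F) :
    ∃ R : Finset F, #R = i + 1 ∧ (∀ x ∈ R, ∀ y ∈ R, x + y ≠ 0) ∧ ∑ x ∈ R, x ^ 2 ≠ 0 := by
  induction i with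
  | zero =>
    refine ⟨{1}, by simp, ?_, by simp⟩
    simpa [one_add_one_eq_two] using Ring.two_ne_zero hF
  | succ i ih =>
    obtain ⟨R, hRc, hR, hs⟩ := ih (by omega)
    obtain ⟨S, hSc, hS, hχ⟩ := exists_insert hF one_ne_zero R hR hs (by omega)
    refine ⟨S, by omega, hS, fun h => ?_⟩
    simp [h] at hχ

/-- After reaching the class of `ζ` modulo squares, a dilation makes the sum of squares equal to
`ζ`. -/
lemma exists_sum_sq_eq (hF : ringChar F ≠ 2) {ζ : F} (hζ : ζ ≠ 0) (j : ℕ) (hj : 2 ≤ j)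
    (hjq : 4 * j + 1 < Fintype.card F) :
    ∃ R : Finset F, #R = j ∧ (∀ x ∈ R, ∀ y ∈ R, x + y ≠ 0) ∧ ∑ x ∈ R, x ^ 2 = ζ := by
  obtain ⟨R, hRc, hR, hs⟩ := exists_sum_sq_ne_zero (F := F) hF (j - 2) (by omega)
  obtain ⟨S, hSc, hS, hχ⟩ := exists_insert hF hζ R hR hs (by omega)
  have hne : ζ * ∑ x ∈ S, x ^ 2 ≠ 0 := by
    intro h
    simp [h] at hχ
  obtain ⟨w, hw⟩ := (quadraticChar_one_iff_isSquare hne).1 hχ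
  have hw0 : w ≠ 0 := by
    rintro rfl
    exact hne (by simpa using hw)
  have hc0 : ζ / w ≠ 0 := div_ne_zero hζ hw0
  have hinj : Function.Injective (fun x : F => ζ / w * x) := mul_right_injective₀ hc0
  refine ⟨S.image (fun x => ζ / w * x), ?_, ?_, ?_⟩
  · rw [card_image_of_injective _ hinj]
    omega
  · intro a ha b hb
    obtain ⟨x, hx, rfl⟩ := mem_image.1 ha
    obtain ⟨y, hy, rfl⟩ := mem_image.1 hb
    simp only [← mul_add]
    exact mul_ne_zero hc0 (hS x hx y hy)
  · rw [sum_image fun x _ y _ h => hinj h]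
    simp_rw [mul_pow, ← mul_sum]
    field_simp
    linear_combination hw

/-- In the lower half of the range, the set is `R ∪ -R`, together with `0` if `m` is odd. -/
lemma exists_finset_of_two_mul_card_le (hF : ringChar F ≠ 2) {ζ : F} (hζ : ζ ≠ 0) (m : ℕ)
    (hm : 4 ≤ m) (hmq : 2 * m + 3 ≤ Fintype.card F) :
    ∃ Y : Finset F, #Y = m ∧ ∑ y ∈ Y, y = 0 ∧ ∑ y ∈ Y, y ^ 2 = ζ := by
  have h2 : (2 : F) ≠ 0 := Ring.two_ne_zero hF
  obtain ⟨R, hRc, hR, hs⟩ :=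
    exists_sum_sq_eq hF (div_ne_zero hζ h2) (m / 2) (by omega) (by omega)
  have hdisj : Disjoint R (R.image (fun x => -x)) := by
    rw [disjoint_left]
    intro x hx hx'
    obtain ⟨y, hy, rfl⟩ := mem_image.1 hx'
    exact hR _ hx y hy (by ring)
  have hinj : Set.InjOn (fun x : F => -x) R := neg_injective.injOn
  have hYc : #(R ∪ R.image (fun x => -x)) = 2 * (m / 2) := by
    rw [card_union_of_disjoint hdisj, card_image_of_injOn hinj]
    omega
  have hY1 : ∑ y ∈ R ∪ R.image (fun x => -x), y = 0 := by
    rw [sum_union hdisj, sum_image hinj, sum_neg_distrib]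
    ring
  have hY2 : ∑ y ∈ R ∪ R.image (fun x => -x), y ^ 2 = ζ := by
    rw [sum_union hdisj, sum_image hinj]
    simp only [neg_sq, hs]
    field_simp
    ring
  rcases Nat.even_or_odd' m with ⟨j, hj | hj⟩
  · exact ⟨_, by omega, hY1, hY2⟩
  · have h0R : (0 : F) ∉ R := fun h => hR 0 h 0 h (by simp)
    have h0 : (0 : F) ∉ R ∪ R.image (fun x => -x) := by
      simpa using h0R
    refine ⟨insert 0 (R ∪ R.image (fun x => -x)), ?_, ?_, ?_⟩
    · rw [card_insert_of_notMem h0]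
      omega
    · rw [sum_insert h0, hY1, add_zero]
    · rw [sum_insert h0, hY2]
      simp

end

/-- let `F_q` have odd characteristic `p`, and let `k` satisfy
`3 < k + 2 < q - 3`, `k + 2 ≠ (q-1)/2`, and `k + 2 ≠ (q+1)/2` (the last two
expressed as `2 * (k+2) ≠ q - 1` and `2 * (k+2) ≠ q + 1`). Then for every
`ζ ∈ F_q^*` there exist `k + 2` distinct elements `y_1, …, y_{k+2}` of `F_q`
with `y_1 + ⋯ + y_{k+2} = 0` and `y_1² + ⋯ + y_{k+2}² = ζ`. -/
theorem stmt_18 {F : Type*} [Field F] [Fintype F]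
    (p : ℕ) [Fact p.Prime] [CharP F p] (hp : p ≠ 2)
    (k : ℕ) (hk3 : 3 < k + 2) (hkq : k + 2 < Fintype.card F - 3)
    (hne1 : 2 * (k + 2) ≠ Fintype.card F - 1)
    (hne2 : 2 * (k + 2) ≠ Fintype.card F + 1) :
    ∀ ζ : F, ζ ≠ 0 →
      ∃ y : Fin (k + 2) → F, Function.Injective y ∧
        (∑ i, y i) = 0 ∧ (∑ i, (y i) ^ 2) = ζ := by
  classical
  intro ζ hζ
  have hF : ringChar F ≠ 2 := by
    rwa [ringChar.eq F p]
  have hodd := FiniteField.odd_card_of_char_ne_two hF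
  obtain ⟨Y, hYc, hY1, hY2⟩ :
      ∃ Y : Finset F, #Y = k + 2 ∧ ∑ y ∈ Y, y = 0 ∧ ∑ y ∈ Y, y ^ 2 = ζ := by
    by_cases hsmall : 2 * (k + 2) + 3 ≤ Fintype.card F
    · exact exists_finset_of_two_mul_card_le hF hζ _ (by omega) hsmall
    · obtain ⟨Y, hYc, hY1, hY2⟩ := exists_finset_of_two_mul_card_le hF (neg_ne_zero.2 hζ)
        (Fintype.card F - (k + 2)) (by omega) (by omega)
      have hs1 : ∑ x : F, x = 0 := by
        simpa using FiniteField.sum_pow_lt_card_sub_one F 1 (by omega)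
      have hs2 : ∑ x : F, x ^ 2 = 0 := FiniteField.sum_pow_lt_card_sub_one F 2 (by omega)
      refine ⟨Yᶜ, by rw [card_compl]; omega, ?_, ?_⟩
      · rw [← sum_add_sum_compl Y, hY1, zero_add] at hs1
        exact hs1
      · rw [← sum_add_sum_compl Y, hY2] at hs2
        linear_combination hs2
  let e := Y.equivFinOfCardEq hYc
  refine ⟨fun i => (e.symm i : F), Subtype.val_injective.comp e.symm.injective, ?_, ?_⟩
  · rw [Equiv.sum_comp e.symm (fun y : Y => (y : F)), sum_coe_sort Y (fun y => y), hY1]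
  · rw [Equiv.sum_comp e.symm (fun y : Y => (y : F) ^ 2), sum_coe_sort Y (fun y => y ^ 2), hY2]
end
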